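/- Let r ≥ 2, let 1 ≤ n₁ ≤ n₂ ≤ ⋯ ≤ n_r be integers, set n = n₁ + ⋯ + n_r, and let s ≥ 0. For a generic configuration in ℙⁿ(ℂ) of s points P₁,…,P_s and r linear subspaces Λ₁,…,Λ_r of dimensions n₁−1,…,n_r−1 respectively, there exists a rational normal curve passing through P₁,…,P_s and meeting each Λᵢ in exactly nᵢ distinct points if and only if either (s ≤ n₁ + 3 and 1 < n₁ < n₂) or (s ≤ n₂ + 2 and (n₁ = 1 or n₁ = n₂)). -/

import Mathlib

noncomputable section

/-- Projective space `ℙⁿ(ℂ)`, the projectivization of `ℂ^{n+1}`. -/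
abbrev PP (k : ℕ) := Projectivization ℂ (Fin (k + 1) → ℂ)

/-- The vector of the monomials `s^k t^(n-k)`, used to parametrize rational normal curves. -/
def veron (n : ℕ) (v : Fin 2 → ℂ) : Fin (n + 1) → ℂ :=
  fun k => v 0 ^ (k : ℕ) * v 1 ^ (n - (k : ℕ))

/-- `C ⊆ ℙⁿ` is a rational normal curve if it is the image of `[s:t] ↦ [F₀(s,t):⋯:Fₙ(s,t)]`
for a basis `F₀,…,Fₙ` of the degree-`n` binary forms; such a basis is encoded by an
invertible matrix of coefficients applied to the monomial vector `veron`. -/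
def IsRNC (n : ℕ) (C : Set (PP n)) : Prop :=
  ∃ M : Matrix (Fin (n + 1)) (Fin (n + 1)) ℂ, IsUnit M.det ∧
    C = {P : PP n | ∃ v : Fin 2 → ℂ, v ≠ 0 ∧ ∃ c : ℂ, c ≠ 0 ∧
      P.rep = c • M.mulVec (veron n v)}

/-- The linear subspace of `ℙⁿ` given as the projectivization of the column span of a matrix. -/
def projSet {n m : ℕ} (A : Matrix (Fin (n + 1)) (Fin m) ℂ) : Set (PP n) :=
  {P : PP n | P.rep ∈ Submodule.span ℂ (Set.range fun j => fun r => A r j)}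

/-- A property `Q` of configurations of `s` points (rank-one `(n+1)×1` matrices) and `r`
linear subspaces of dimensions `nv j - 1` (rank-`(nv j)` matrices of size `(n+1)×(nv j)`)
holds generically: there is a nonzero polynomial in the matrix entries such that `Q`
holds at every full-rank tuple where the polynomial does not vanish. -/
def GenHoldsPtsSpaces (n s r : ℕ) (nv : Fin r → ℕ)
    (Q : (Fin s → Matrix (Fin (n + 1)) (Fin 1) ℂ) →
         ((j : Fin r) → Matrix (Fin (n + 1)) (Fin (nv j)) ℂ) → Prop) : Prop :=
  ∃ F : MvPolynomial
      ((Fin s × Fin (n + 1) × Fin 1) ⊕ ((j : Fin r) × (Fin (n + 1) × Fin (nv j)))) ℂ,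
    F ≠ 0 ∧ ∀ P B, (∀ i, (P i).rank = 1) → (∀ j, (B j).rank = nv j) →
      MvPolynomial.eval
        (Sum.elim (fun q => P q.1 q.2.1 q.2.2) (fun q => B q.1 q.2.1 q.2.2)) F ≠ 0 →
      Q P B

noncomputable section
open Finset

/-- bracket of two vectors in the plane -/
def br (a b : Fin 2 → ℂ) : ℂ := a 0 * b 1 - a 1 * b 0

lemma br_swap (a b : Fin 2 → ℂ) : br a b = - br b a := by simp only [br]; ring

lemma br_self (a : Fin 2 → ℂ) : br a a = 0 := by simp only [br]; ring

/-- functions given by binary forms of degree `d` -/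
def IsForm (d : ℕ) (h : (Fin 2 → ℂ) → ℂ) : Prop :=
  ∃ p : MvPolynomial (Fin 2) ℂ, p.IsHomogeneous d ∧ ∀ v, h v = MvPolynomial.eval v p

lemma IsForm.add {d : ℕ} {h g : (Fin 2 → ℂ) → ℂ} (H : IsForm d h) (G : IsForm d g) :
    IsForm d (fun v => h v + g v) := by
  obtain ⟨p, hp, hp'⟩ := H
  obtain ⟨q, hq, hq'⟩ := G
  exact ⟨p + q, hp.add hq, fun v => by simp [hp', hq']⟩

lemma IsForm.sub {d : ℕ} {h g : (Fin 2 → ℂ) → ℂ} (H : IsForm d h) (G : IsForm d g) :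
    IsForm d (fun v => h v - g v) := by
  obtain ⟨p, hp, hp'⟩ := H
  obtain ⟨q, hq, hq'⟩ := G
  exact ⟨p - q, hp.sub hq, fun v => by simp [hp', hq']⟩

lemma IsForm.mul {d e : ℕ} {h g : (Fin 2 → ℂ) → ℂ} (H : IsForm d h) (G : IsForm e g) :
    IsForm (d + e) (fun v => h v * g v) := by
  obtain ⟨p, hp, hp'⟩ := H
  obtain ⟨q, hq, hq'⟩ := G
  exact ⟨p * q, hp.mul hq, fun v => by simp [hp', hq']⟩

lemma IsForm.cmul {d : ℕ} {h : (Fin 2 → ℂ) → ℂ} (H : IsForm d h) (c : ℂ) :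
    IsForm d (fun v => c * h v) := by
  obtain ⟨p, hp, hp'⟩ := H
  exact ⟨MvPolynomial.C c * p, hp.C_mul c, fun v => by simp [hp']⟩

lemma IsForm.sum {d : ℕ} {κ : Type*} (s : Finset κ) {h : κ → (Fin 2 → ℂ) → ℂ}
    (H : ∀ k ∈ s, IsForm d (h k)) : IsForm d (fun v => ∑ k ∈ s, h k v) := by
  classical
  induction s using Finset.induction_on with
  | empty => exact ⟨0, MvPolynomial.isHomogeneous_zero _ _ _, fun v => by simp⟩
  | insert a s ha ih =>
    simp only [Finset.sum_insert ha]
    exact (H a (by simp)).add (ih fun k hk => H k (by simp [hk]))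

lemma IsForm.prod {κ : Type*} (s : Finset κ) (d : κ → ℕ) {h : κ → (Fin 2 → ℂ) → ℂ}
    (H : ∀ k ∈ s, IsForm (d k) (h k)) : IsForm (∑ k ∈ s, d k) (fun v => ∏ k ∈ s, h k v) := by
  classical
  induction s using Finset.induction_on with
  | empty => exact ⟨1, MvPolynomial.isHomogeneous_one _ _, fun v => by simp⟩
  | insert a s ha ih =>
    simp only [Finset.prod_insert ha, Finset.sum_insert ha]
    exact (H a (by simp)).mul (ih fun k hk => H k (by simp [hk]))

lemma isForm_br (b : Fin 2 → ℂ) : IsForm 1 (fun v => br v b) := by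
  refine ⟨MvPolynomial.C (b 1) * MvPolynomial.X 0 - MvPolynomial.C (b 0) * MvPolynomial.X 1,
    (MvPolynomial.isHomogeneous_C_mul_X _ _).sub (MvPolynomial.isHomogeneous_C_mul_X _ _),
    fun v => ?_⟩
  simp [br]; ring

lemma isForm_prod_br {κ : Type*} (s : Finset κ) (b : κ → Fin 2 → ℂ) :
    IsForm s.card (fun v => ∏ k ∈ s, br v (b k)) := by
  have := IsForm.prod s (fun _ => 1) (h := fun k v => br v (b k)) (fun k _ => isForm_br _)
  simpa using this

lemma isForm_veron (d : ℕ) (k : Fin (d + 1)) : IsForm d (fun v => veron d v k) := by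
  refine ⟨MvPolynomial.X 0 ^ (k : ℕ) * MvPolynomial.X 1 ^ (d - (k : ℕ)), ?_, fun v => by
    simp [veron]⟩
  have := (MvPolynomial.isHomogeneous_X_pow (R := ℂ) (0 : Fin 2) (k : ℕ)).mul
    (MvPolynomial.isHomogeneous_X_pow (R := ℂ) (1 : Fin 2) (d - (k : ℕ)))
  rwa [show (k : ℕ) + (d - (k : ℕ)) = d by omega] at this

lemma isForm_of_coef {d : ℕ} (a : Fin (d + 1) → ℂ) :
    IsForm d (fun v => ∑ k, a k * veron d v k) :=
  IsForm.sum _ fun k _ => (isForm_veron d k).cmul _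

lemma IsForm.coef {d : ℕ} {h : (Fin 2 → ℂ) → ℂ} (H : IsForm d h) :
    ∃ a : Fin (d + 1) → ℂ, ∀ v, h v = ∑ k, a k * veron d v k := by
  obtain ⟨p, hp, hp'⟩ := H
  have key : ∀ m ∈ p.support, ∃ a : Fin (d + 1) → ℂ, ∀ v : Fin 2 → ℂ,
      p.coeff m * ∏ i, v i ^ m i = ∑ k, a k * veron d v k := by
    intro m hm
    have hd : m 0 + m 1 = d := by
      have := hp.degree_eq_sum_deg_support hm
      change d = m.degree at this
      rw [Finsupp.degree_eq_sum] at this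
      simpa using this.symm
    refine ⟨Pi.single ⟨m 0, by omega⟩ (p.coeff m), fun v => ?_⟩
    rw [Finset.sum_eq_single ⟨m 0, by omega⟩]
    · have : d - m 0 = m 1 := by omega
      simp [veron, this]
    · intro b _ hb
      simp [Pi.single_eq_of_ne hb]
    · simp
  choose! a ha using key
  refine ⟨fun k => ∑ m ∈ p.support, a m k, fun v => ?_⟩
  rw [hp', MvPolynomial.eval_eq', Finset.sum_congr rfl (fun m hm => ha m hm v), Finset.sum_comm]
  simp [Finset.sum_mul]

lemma IsForm.eq_zero {d : ℕ} {h : (Fin 2 → ℂ) → ℂ} (H : IsForm d h) {κ : Type*} [Fintype κ]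
    (hc : Fintype.card κ = d + 1) (z : κ → Fin 2 → ℂ)
    (hz : ∀ i j, i ≠ j → br (z i) (z j) ≠ 0) (h0 : ∀ i, h (z i) = 0) (v : Fin 2 → ℂ) :
    h v = 0 := by
  classical
  obtain ⟨a, ha⟩ := H.coef
  let e := (Fintype.equivFinOfCardEq hc).symm
  have hdet : (Matrix.projVandermonde (fun i => z (e i) 0) (fun i => z (e i) 1)).det ≠ 0 := by
    rw [Matrix.det_projVandermonde]
    refine Finset.prod_ne_zero_iff.2 fun i _ => Finset.prod_ne_zero_iff.2 fun j hj => ?_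
    have hij : j ≠ i := (Finset.mem_Ioi.1 hj).ne'
    have := hz (e j) (e i) (by simpa using hij)
    rw [br] at this
    intro h; apply this; rw [← h]; ring
  have : a = 0 := by
    apply Matrix.eq_zero_of_mulVec_eq_zero hdet
    ext i
    have := h0 (e i)
    rw [ha] at this
    simp only [Matrix.mulVec, dotProduct, Pi.zero_apply]
    rw [← this]
    refine Finset.sum_congr rfl fun k _ => ?_
    rw [Matrix.projVandermonde_apply, veron, Fin.val_rev, mul_comm]
    congr 3
    omega
  rw [ha, this]; simp

lemma IsForm.lagrange {d : ℕ} {h : (Fin 2 → ℂ) → ℂ} (H : IsForm d h) {κ : Type*} [Fintype κ]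
    [DecidableEq κ]
    (hc : Fintype.card κ = d + 1) (z : κ → Fin 2 → ℂ)
    (hz : ∀ i j, i ≠ j → br (z i) (z j) ≠ 0) (v : Fin 2 → ℂ) :
    h v = ∑ k, h (z k) / (∏ l ∈ univ.erase k, br (z k) (z l)) *
      ∏ l ∈ univ.erase k, br v (z l) := by
  have F : IsForm d (fun v => h v - ∑ k, h (z k) / (∏ l ∈ univ.erase k, br (z k) (z l)) *
      ∏ l ∈ univ.erase k, br v (z l)) := by
    refine H.sub (IsForm.sum _ fun k _ => IsForm.cmul ?_ _)
    have := isForm_prod_br (univ.erase k) z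
    rwa [Finset.card_erase_of_mem (mem_univ _), Finset.card_univ, hc] at this
  have := F.eq_zero hc z hz (fun i => ?_) v
  · exact sub_eq_zero.1 this
  · rw [Finset.sum_eq_single i]
    · have : (∏ l ∈ univ.erase i, br (z i) (z l)) ≠ 0 :=
        Finset.prod_ne_zero_iff.2 fun l hl => hz _ _ (Finset.ne_of_mem_erase hl).symm
      rw [div_mul_cancel₀ _ this, sub_self]
    · intro b _ hb
      exact mul_eq_zero_of_right _ (Finset.prod_eq_zero (i := i) (by simp [hb.symm]) (br_self _))
    · simp

lemma exists_br_ne {v : Fin 2 → ℂ} (hv : v ≠ 0) : ∃ b, br v b ≠ 0 := by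
  by_contra! h
  apply hv
  ext i
  have h0 := h ![0, 1]
  have h1 := h ![1, 0]
  simp [br] at h0 h1
  fin_cases i <;> simp [h0, h1]

lemma veron_indep {n m : ℕ} (hm : m ≤ n + 1) (z : Fin m → Fin 2 → ℂ) (h0 : ∀ i, z i ≠ 0)
    (hz : ∀ i j, i ≠ j → br (z i) (z j) ≠ 0) :
    LinearIndependent ℂ (fun i => veron n (z i)) := by
  classical
  rw [Fintype.linearIndependent_iff]
  intro g hg i
  obtain ⟨b, hb⟩ := exists_br_ne (h0 i)
  have F := (isForm_prod_br (univ.erase i) z).mul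
    (isForm_prod_br (univ : Finset (Fin (n + 1 - m))) (fun _ => b))
  have hcard : (univ.erase i).card + (univ : Finset (Fin (n + 1 - m))).card = n := by
    rw [Finset.card_erase_of_mem (mem_univ _)]
    have := i.2
    simp
    omega
  rw [hcard] at F
  obtain ⟨a, ha⟩ := F.coef
  have key : ∑ j, g j * ∑ k, a k * veron n (z j) k = 0 := by
    have : ∀ k, ∑ j, g j * veron n (z j) k = 0 := fun k => by
      have := congrFun hg k
      simpa [Finset.sum_apply] using this
    calc ∑ j, g j * ∑ k, a k * veron n (z j) k
        = ∑ k, a k * ∑ j, g j * veron n (z j) k := by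
          simp only [Finset.mul_sum]
          rw [Finset.sum_comm]
          exact Finset.sum_congr rfl fun _ _ => Finset.sum_congr rfl fun _ _ => by ring
      _ = 0 := by simp [this]
  rw [Finset.sum_eq_single i] at key
  · rw [← ha] at key
    rcases mul_eq_zero.1 key with h | h
    · exact h
    · exfalso
      rcases mul_eq_zero.1 h with h | h
      · exact Finset.prod_ne_zero_iff.2
          (fun l hl => hz _ _ (Finset.ne_of_mem_erase hl).symm) h
      · exact Finset.prod_ne_zero_iff.2 (fun l hl => hb) h
  · intro j _ hj
    rw [← ha, Finset.prod_eq_zero (i := j) (by simp [hj]) (br_self _)]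
    ring
  · simp

end

noncomputable section
open Finset

/-- polynomial functions -/
def IsPF {σ : Type*} (g : (σ → ℂ) → ℂ) : Prop :=
  ∃ p : MvPolynomial σ ℂ, ∀ x, g x = MvPolynomial.eval x p

section PF
variable {σ τ : Type*}

lemma IsPF.const (c : ℂ) : IsPF (fun _ : σ → ℂ => c) := ⟨MvPolynomial.C c, fun x => by simp⟩

lemma IsPF.coord (i : σ) : IsPF (fun x : σ → ℂ => x i) := ⟨MvPolynomial.X i, fun x => by simp⟩

lemma IsPF.add {g h : (σ → ℂ) → ℂ} (G : IsPF g) (H : IsPF h) : IsPF (fun x => g x + h x) := by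
  obtain ⟨p, hp⟩ := G
  obtain ⟨q, hq⟩ := H
  exact ⟨p + q, fun x => by simp [hp, hq]⟩

lemma IsPF.sub {g h : (σ → ℂ) → ℂ} (G : IsPF g) (H : IsPF h) : IsPF (fun x => g x - h x) := by
  obtain ⟨p, hp⟩ := G
  obtain ⟨q, hq⟩ := H
  exact ⟨p - q, fun x => by simp [hp, hq]⟩

lemma IsPF.mul {g h : (σ → ℂ) → ℂ} (G : IsPF g) (H : IsPF h) : IsPF (fun x => g x * h x) := by
  obtain ⟨p, hp⟩ := G
  obtain ⟨q, hq⟩ := H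
  exact ⟨p * q, fun x => by simp [hp, hq]⟩

lemma IsPF.sum {κ : Type*} (s : Finset κ) {g : κ → (σ → ℂ) → ℂ} (G : ∀ k, IsPF (g k)) :
    IsPF (fun x => ∑ k ∈ s, g k x) := by
  choose p hp using G
  exact ⟨∑ k ∈ s, p k, fun x => by simp [hp]⟩

lemma IsPF.prod {κ : Type*} (s : Finset κ) {g : κ → (σ → ℂ) → ℂ} (G : ∀ k, IsPF (g k)) :
    IsPF (fun x => ∏ k ∈ s, g k x) := by
  choose p hp using G
  exact ⟨∏ k ∈ s, p k, fun x => by simp [hp]⟩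

lemma IsPF.det {κ : Type*} [Fintype κ] [DecidableEq κ] {A : (σ → ℂ) → Matrix κ κ ℂ}
    (G : ∀ i j, IsPF (fun x => A x i j)) : IsPF (fun x => (A x).det) := by
  choose p hp using G
  refine ⟨(Matrix.of p).det, fun x => ?_⟩
  have : A x = (MvPolynomial.eval x).mapMatrix (Matrix.of p) := by
    ext i j
    simpa using hp i j x
  simp only [RingHom.map_det, this]

lemma IsPF.ite (P : Prop) [Decidable P] {g h : (σ → ℂ) → ℂ} (G : IsPF g) (H : IsPF h) :
    IsPF (fun x => if P then g x else h x) := by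
  split_ifs <;> assumption

lemma IsPF.cramer {κ : Type*} [Fintype κ] [DecidableEq κ] {A : (σ → ℂ) → Matrix κ κ ℂ}
    {b : (σ → ℂ) → κ → ℂ}
    (G : ∀ i j, IsPF (fun x => A x i j)) (H : ∀ i, IsPF (fun x => b x i)) (k : κ) :
    IsPF (fun x => (A x).cramer (b x) k) := by
  simp only [Matrix.cramer_apply]
  refine IsPF.det fun i j => ?_
  simp only [Matrix.updateCol_apply]
  exact IsPF.ite _ (H i) (G i j)

lemma IsPF.adjugate {κ : Type*} [Fintype κ] [DecidableEq κ] {A : (σ → ℂ) → Matrix κ κ ℂ}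
    (G : ∀ i j, IsPF (fun x => A x i j)) (k l : κ) :
    IsPF (fun x => (A x).adjugate k l) := by
  simp only [Matrix.adjugate_apply]
  refine IsPF.det fun i j => ?_
  simp only [Matrix.updateRow_apply]
  exact IsPF.ite _ (IsPF.const _) (G i j)

lemma IsPF.comp {g : (τ → ℂ) → ℂ} (G : IsPF g) {φ : (σ → ℂ) → τ → ℂ}
    (H : ∀ i, IsPF (fun x => φ x i)) : IsPF (fun x => g (φ x)) := by
  obtain ⟨p, hp⟩ := G
  choose q hq using H
  refine ⟨MvPolynomial.bind₁ q p, fun x => ?_⟩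
  have : φ x = fun i => MvPolynomial.eval x (q i) := funext fun i => hq i x
  change g (φ x) = _
  rw [hp, this]
  simp only [MvPolynomial.bind₁, MvPolynomial.aeval_def, ← MvPolynomial.coe_eval₂Hom]
  rw [← RingHom.comp_apply]
  congr 1
  ext <;> simp

lemma IsPF.joint {g h : (σ → ℂ) → ℂ} (G : IsPF g) (H : IsPF h) (hg : ∃ x, g x ≠ 0)
    (hh : ∃ x, h x ≠ 0) : ∃ x, g x * h x ≠ 0 := by
  obtain ⟨p, hp⟩ := G
  obtain ⟨q, hq⟩ := H
  by_contra! hc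
  have h1 : p * q = 0 := MvPolynomial.funext fun x => by simpa [hp, hq] using hc x
  rcases mul_eq_zero.1 h1 with h | h
  · obtain ⟨x, hx⟩ := hg; apply hx; rw [hp, h]; simp
  · obtain ⟨x, hx⟩ := hh; apply hx; rw [hq, h]; simp

/-- families of univariate polynomials with polynomial coefficients -/
def IsPFP (f : (σ → ℂ) → Polynomial ℂ) : Prop := ∀ k, IsPF (fun x => (f x).coeff k)

lemma IsPFP.const (c : Polynomial ℂ) : IsPFP (fun _ : σ → ℂ => c) := fun _ => IsPF.const _

lemma IsPFP.C {g : (σ → ℂ) → ℂ} (G : IsPF g) : IsPFP (fun x => Polynomial.C (g x)) := by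
  intro k
  simp only [Polynomial.coeff_C]
  exact IsPF.ite _ G (IsPF.const _)

lemma IsPFP.mul {f g : (σ → ℂ) → Polynomial ℂ} (F : IsPFP f) (G : IsPFP g) :
    IsPFP (fun x => f x * g x) := by
  intro k
  simp only [Polynomial.coeff_mul]
  exact IsPF.sum _ fun a => (F _).mul (G _)

lemma IsPFP.sub {f g : (σ → ℂ) → Polynomial ℂ} (F : IsPFP f) (G : IsPFP g) :
    IsPFP (fun x => f x - g x) := by
  intro k
  simp only [Polynomial.coeff_sub]
  exact (F _).sub (G _)

lemma IsPFP.sum {κ : Type*} (s : Finset κ) {g : κ → (σ → ℂ) → Polynomial ℂ}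
    (G : ∀ k, IsPFP (g k)) : IsPFP (fun x => ∑ k ∈ s, g k x) := by
  intro k
  simp only [Polynomial.finsetSum_coeff]
  exact IsPF.sum _ fun a => G a k

lemma IsPFP.prod {κ : Type*} (s : Finset κ) {g : κ → (σ → ℂ) → Polynomial ℂ}
    (G : ∀ k, IsPFP (g k)) : IsPFP (fun x => ∏ k ∈ s, g k x) := by
  classical
  induction s using Finset.induction_on with
  | empty => simpa using IsPFP.const _
  | insert a s ha ih => simp only [Finset.prod_insert ha]; exact (G a).mul ih

/-- discriminant-like function -/
def sepD (n : ℕ) (f : Polynomial ℂ) : ℂ :=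
  f.coeff n * f.resultant f.derivative n (n - 1)

lemma IsPFP.sepD {f : (σ → ℂ) → Polynomial ℂ} (F : IsPFP f) (n : ℕ) :
    IsPF (fun x => sepD n (f x)) := by
  refine (F n).mul ?_
  unfold Polynomial.resultant
  refine IsPF.det fun i j => ?_
  unfold Polynomial.sylvester
  simp only [Matrix.of_apply]
  refine Fin.addCases (fun j => ?_) (fun j => ?_) j
  · simp only [Fin.addCases_left]
    refine IsPF.ite _ ?_ (IsPF.const _)
    simp only [Polynomial.coeff_derivative]
    exact (F _).mul (IsPF.const _)
  · simp only [Fin.addCases_right]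
    exact IsPF.ite _ (F _) (IsPF.const _)

end PF

lemma sepD_ne {n : ℕ} {f : Polynomial ℂ} (hf : f.natDegree ≤ n) (h : sepD n f ≠ 0) :
    f.natDegree = n ∧ f.Separable := by
  have h1 : f.coeff n ≠ 0 := left_ne_zero_of_mul h
  have h2 := right_ne_zero_of_mul h
  have hd : f.natDegree = n := le_antisymm hf (Polynomial.le_natDegree_of_ne_zero h1)
  refine ⟨hd, ?_⟩
  have hd' : f.derivative.natDegree = n - 1 := by rw [Polynomial.natDegree_derivative, hd]
  rw [← hd', ← hd, Ne, Polynomial.resultant_eq_zero_iff] at h2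
  by_contra hs
  apply h2
  refine ⟨Or.inl ?_, hs⟩
  rintro rfl
  simp at h1

lemma sepD_ne_of {n : ℕ} {f : Polynomial ℂ} (hf : f.natDegree = n) (h0 : f ≠ 0)
    (h : f.Separable) : sepD n f ≠ 0 := by
  have hd' : f.derivative.natDegree = n - 1 := by rw [Polynomial.natDegree_derivative, hf]
  refine mul_ne_zero ?_ ?_
  · rw [← hf]; simpa using h0
  · rw [← hd', ← hf, Ne, Polynomial.resultant_eq_zero_iff]
    rintro ⟨_, h'⟩
    exact h' h

end

noncomputable section
open Finset

/-- coordinates adapted to the subspaces -/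
abbrev Ix {r : ℕ} (nv : Fin r → ℕ) := Option ((j : Fin r) × Fin (nv j))

/-- linear-algebra core of the existence of the curve, in adapted coordinates -/
def Core {r : ℕ} (nv : Fin r → ℕ) (n s : ℕ) (x : ℕ × Ix nv → ℂ) : Prop :=
  ∃ Φ : (Fin 2 → ℂ) → Ix nv → ℂ, (∀ o, IsForm n (fun v => Φ v o)) ∧
    (∀ ξ : Ix nv → ℂ, (∀ v, ∑ o, ξ o * Φ v o = 0) → ξ = 0) ∧
    (∀ i < s, ∃ v, v ≠ 0 ∧ ∃ c : ℂ, c ≠ 0 ∧ ∀ o, x (i, o) = c * Φ v o) ∧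
    ∀ j, ∃ w : Fin (nv j) → Fin 2 → ℂ, (∀ k, w k ≠ 0) ∧
      (∀ k l, k ≠ l → br (w k) (w l) ≠ 0) ∧
      ∀ k o, (∀ t, o ≠ some ⟨j, t⟩) → Φ (w k) o = 0

lemma veron_smul (n : ℕ) (a : ℂ) (v : Fin 2 → ℂ) : veron n (a • v) = a ^ n • veron n v := by
  ext k
  simp only [veron, Pi.smul_apply, smul_eq_mul, mul_pow]
  have : a ^ n = a ^ (k : ℕ) * a ^ (n - (k : ℕ)) := by
    rw [← pow_add]; congr 1; omega
  rw [this]; ring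

lemma veron_ne {n : ℕ} {v : Fin 2 → ℂ} (hv : v ≠ 0) : veron n v ≠ 0 :=
  (veron_indep (n := n) (m := 1) (by omega) (fun _ => v) (fun _ => hv)
    (fun i j h => absurd (Subsingleton.elim i j) h)).ne_zero 0

lemma br_zero_iff {a b : Fin 2 → ℂ} (ha : a ≠ 0) (hb : b ≠ 0) (h : br a b = 0) :
    ∃ c : ℂ, c ≠ 0 ∧ a = c • b := by
  rw [br] at h
  by_cases h0 : b 0 = 0
  · have h1 : b 1 ≠ 0 := fun h1 => hb (by ext i; fin_cases i <;> simp [h0, h1])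
    have : a = (a 1 / b 1) • b := by
      ext i; fin_cases i
      · simp [h0] at h ⊢; tauto
      · simp [h1]
    refine ⟨_, ?_, this⟩
    intro hc; rw [hc] at this; simp at this; exact ha this
  · have : a = (a 0 / b 0) • b := by
      ext i; fin_cases i
      · simp [h0]
      · simp; field_simp; linear_combination -h
    refine ⟨_, ?_, this⟩
    intro hc; rw [hc] at this; simp at this; exact ha this

lemma br_zero_of_veron {n : ℕ} (hn : 1 ≤ n) {a b : Fin 2 → ℂ} (ha : a ≠ 0) (hb : b ≠ 0) {c : ℂ}
    (h : veron n a = c • veron n b) : br a b = 0 := by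
  by_contra hab
  have hba : br b a ≠ 0 := by rw [br_swap]; exact neg_ne_zero.2 hab
  have := veron_indep (n := n) (m := 2) (by omega) ![a, b]
    (fun i => by fin_cases i <;> simp [ha, hb])
    (fun i j hij => by fin_cases i <;> fin_cases j <;> simp_all)
  rw [Fintype.linearIndependent_iff] at this
  have := this ![1, -c] (by simp [h]) 0
  simp at this

section
variable {r : ℕ} {nv : Fin r → ℕ} {n s : ℕ}

/-- the coordinate change matrix -/
def TB (e : Fin (n + 1) ≃ Ix nv) (B : (j : Fin r) → Matrix (Fin (n + 1)) (Fin (nv j)) ℂ) :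
    Matrix (Fin (n + 1)) (Fin (n + 1)) ℂ :=
  fun a c => (e c).elim (if a = c then 1 else 0) (fun o => B o.1 a o.2)

/-- the points in adapted coordinates -/
def XP (e : Fin (n + 1) ≃ Ix nv) (P : Fin s → Matrix (Fin (n + 1)) (Fin 1) ℂ)
    (B : (j : Fin r) → Matrix (Fin (n + 1)) (Fin (nv j)) ℂ) (y : ℕ × Ix nv → ℂ) :
    ℕ × Ix nv → ℂ :=
  fun q => if h : q.1 < s then
    ((TB e B).adjugate.mulVec (fun a => P ⟨q.1, h⟩ a 0)) (e.symm q.2) else y q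

lemma TB_mulVec_block (e : Fin (n + 1) ≃ Ix nv)
    (B : (j : Fin r) → Matrix (Fin (n + 1)) (Fin (nv j)) ℂ) (j : Fin r) (z : Ix nv → ℂ)
    (hz : ∀ o, (∀ t, o ≠ some ⟨j, t⟩) → z o = 0) :
    (TB e B).mulVec (fun c => z (e c)) = ∑ t, z (some ⟨j, t⟩) • (fun a => B j a t) := by
  ext a
  simp only [Matrix.mulVec, dotProduct, Finset.sum_apply, Pi.smul_apply, smul_eq_mul]
  rw [← Equiv.sum_comp e.symm]
  simp only [TB, Equiv.apply_symm_apply]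
  rw [Fintype.sum_option, hz none (by simp), Fintype.sum_sigma, Finset.sum_eq_single j]
  · simp [mul_comm]
  · intro b _ hb
    refine Finset.sum_eq_zero fun t _ => ?_
    rw [hz]
    · simp
    · rintro t' h
      simp only [Option.some.injEq, Sigma.mk.injEq] at h
      exact hb h.1
  · simp

lemma card_le (e : Fin (n + 1) ≃ Ix nv) (j : Fin r) : nv j ≤ n := by
  have h1 : Fintype.card (Ix nv) = n + 1 := by rw [← Fintype.card_congr e]; simp
  have h2 : Fintype.card (Fin (nv j)) ≤ Fintype.card ((j : Fin r) × Fin (nv j)) :=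
    Fintype.card_le_of_injective (fun t => ⟨j, t⟩) (fun a b h => by simpa using h)
  rw [Fintype.card_option] at h1
  simp only [Fintype.card_fin] at h2
  omega

lemma core_to_Q (hn : 1 ≤ n) (e : Fin (n + 1) ≃ Ix nv)
    (P : Fin s → Matrix (Fin (n + 1)) (Fin 1) ℂ)
    (B : (j : Fin r) → Matrix (Fin (n + 1)) (Fin (nv j)) ℂ) (y : ℕ × Ix nv → ℂ)
    (hT : (TB e B).det ≠ 0) (H : Core nv n s (XP e P B y)) :
    ∃ C : Set (PP n), IsRNC n C ∧ (∀ i, projSet (P i) ⊆ C) ∧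
        ∀ j, (C ∩ projSet (B j)).ncard = nv j := by
  obtain ⟨Φ, hΦ, hind, hpt, hsp⟩ := H
  choose a ha using fun o => (hΦ o).coef
  set M' : Matrix (Fin (n + 1)) (Fin (n + 1)) ℂ := fun c k => a (e c) k with hM'
  have hM'v : ∀ v, M'.mulVec (veron n v) = fun c => Φ v (e c) := by
    intro v; ext c
    simp only [Matrix.mulVec, dotProduct, hM']
    rw [ha]
  have hM'd : M'.det ≠ 0 := by
    intro h0
    obtain ⟨ξ, hξ, hξ'⟩ := Matrix.exists_vecMul_eq_zero_iff.2 h0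
    apply hξ
    have := hind (fun o => ξ (e.symm o)) (fun v => by
      rw [← Equiv.sum_comp e]
      simp only [Equiv.symm_apply_apply]
      have h1 : dotProduct ξ (M'.mulVec (veron n v)) = 0 := by
        rw [Matrix.dotProduct_mulVec, hξ']; simp
      rw [hM'v] at h1
      exact h1)
    ext c
    have := congrFun this (e c)
    simpa using this
  set T := TB e B with hTdef
  set M := T * M' with hM
  have hMd : M.det ≠ 0 := by rw [hM, Matrix.det_mul]; exact mul_ne_zero hT hM'd
  have hMv : ∀ v, M.mulVec (veron n v) = T.mulVec (fun c => Φ v (e c)) := by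
    intro v; rw [hM, ← Matrix.mulVec_mulVec, hM'v]
  have hMinj : Function.Injective M.mulVec :=
    Matrix.mulVec_injective_iff_isUnit.2 ((Matrix.isUnit_iff_isUnit_det _).2 (Ne.isUnit hMd))
  have hMne : ∀ v, v ≠ 0 → M.mulVec (veron n v) ≠ 0 := by
    intro v hv h
    exact veron_ne hv (hMinj (by rw [h, Matrix.mulVec_zero]))
  refine ⟨_, ⟨M, Ne.isUnit hMd, rfl⟩, ?_, ?_⟩
  · intro i p hp
    obtain ⟨v, hv, c, hc, hvc⟩ := hpt i i.2
    have h1 : T.det • (fun a => P i a 0) = c • M.mulVec (veron n v) := by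
      have h2 : T.adjugate.mulVec (fun a => P i a 0) = c • fun c => Φ v (e c) := by
        ext d
        have := hvc (e d)
        simp only [XP, i.2, dif_pos, Equiv.symm_apply_apply] at this
        exact this
      have h3 := congrArg T.mulVec h2
      rw [Matrix.mulVec_mulVec, Matrix.mul_adjugate, Matrix.smul_mulVec, Matrix.one_mulVec,
        Matrix.mulVec_smul] at h3
      rw [h3, hMv]
    simp only [projSet, Set.mem_setOf_eq] at hp
    have hr : Set.range (fun (j : Fin 1) => fun r => P i r j) = {fun r => P i r 0} := by
      ext z; simp [eq_comm]
    rw [hr, Submodule.mem_span_singleton] at hp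
    obtain ⟨b, hb⟩ := hp
    have hb0 : b ≠ 0 := by
      rintro rfl
      exact p.rep_nonzero (by rw [← hb]; simp)
    refine ⟨v, hv, b * (T.det)⁻¹ * c, by simp [hb0, hc, hT], ?_⟩
    rw [mul_smul, ← h1, smul_smul, mul_assoc, inv_mul_cancel₀ hT, mul_one, hb]
  · intro j
    obtain ⟨w, hw0, hwb, hwΦ⟩ := hsp j
    have hspan : ∀ k, M.mulVec (veron n (w k)) ∈
        Submodule.span ℂ (Set.range fun j' => fun r => B j r j') := by
      intro k
      rw [hMv, TB_mulVec_block e B j (Φ (w k)) (hwΦ k)]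
      exact Submodule.sum_mem _ fun t _ => Submodule.smul_mem _ _ (Submodule.subset_span ⟨t, rfl⟩)
    let f : Fin (nv j) → PP n := fun k => Projectivization.mk ℂ _ (hMne (w k) (hw0 k))
    have hfi : Function.Injective f := by
      intro k l hkl
      by_contra hne
      obtain ⟨c, hc⟩ := (Projectivization.mk_eq_mk_iff' _ _ _ _ _).1 hkl
      rw [← Matrix.mulVec_smul] at hc
      exact hwb k l hne (br_zero_of_veron hn (hw0 k) (hw0 l) (hMinj hc).symm)
    have hrange : ({P : PP n | ∃ v : Fin 2 → ℂ, v ≠ 0 ∧ ∃ c : ℂ, c ≠ 0 ∧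
      P.rep = c • M.mulVec (veron n v)} ∩ projSet (B j)) = Set.range f := by
      ext p
      constructor
      · rintro ⟨⟨v, hv, c, hc, hp⟩, hpB⟩
        by_cases hex : ∃ k, br v (w k) = 0
        · obtain ⟨k, hk⟩ := hex
          obtain ⟨d, hd, hdv⟩ := br_zero_iff hv (hw0 k) hk
          refine ⟨k, ?_⟩
          rw [← p.mk_rep]
          refine ((Projectivization.mk_eq_mk_iff' _ _ _ _ _).2 ⟨c * d ^ n, ?_⟩).symm
          rw [hp, hdv, veron_smul, Matrix.mulVec_smul, smul_smul]
        · exfalso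
          push Not at hex
          have hli := veron_indep (n := n) (m := nv j + 1) (by have := card_le e j; omega)
            (Fin.cons v w) (fun i => by refine Fin.cases ?_ (fun k => ?_) i <;> simp [hv, hw0])
            (fun i => by
              refine Fin.cases (fun l => ?_) (fun k l => ?_) i
              · refine Fin.cases (fun h => absurd rfl h) (fun l _ => ?_) l
                simpa using hex l
              · refine Fin.cases (fun _ => ?_) (fun l h => ?_) l
                · simp only [Fin.cons_succ, Fin.cons_zero]
                  rw [br_swap]; exact neg_ne_zero.2 (hex k)
                · simp only [Fin.cons_succ]
                  exact hwb _ _ (by simpa using h))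
          have hli2 := hli.map' M.mulVecLin (LinearMap.ker_eq_bot.2 (by
            intro a b h; exact hMinj (by simpa using h)))
          set S := Submodule.span ℂ (Set.range fun j' => fun r => B j r j') with hS
          have hvS : M.mulVec (veron n v) ∈ S := by
            have h1 : p.rep ∈ S := hpB
            rw [hp] at h1
            exact (Submodule.smul_mem_iff _ hc).1 h1
          have hmem : ∀ i, (M.mulVecLin ∘ fun i => veron n
              ((Fin.cons v w : Fin (nv j + 1) → Fin 2 → ℂ) i)) i ∈ S := by
            intro i
            refine Fin.cases ?_ (fun k => ?_) i
            · simpa using hvS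
            · simpa using hspan k
          have hle : Submodule.span ℂ (Set.range (M.mulVecLin ∘ fun i => veron n
              ((Fin.cons v w : Fin (nv j + 1) → Fin 2 → ℂ) i))) ≤ S :=
            Submodule.span_le.2 (by rintro _ ⟨i, rfl⟩; exact hmem i)
          have h1 := Submodule.finrank_mono hle
          rw [finrank_span_eq_card hli2] at h1
          have h2 : Module.finrank ℂ S ≤ nv j := by
            have := finrank_range_le_card (R := ℂ) (fun j' => fun r => B j r j')
            simpa [Set.finrank] using this
          simp at h1
          omega
      · rintro ⟨k, rfl⟩
        obtain ⟨u, hu⟩ := Projectivization.exists_smul_eq_mk_rep ℂ _ (hMne (w k) (hw0 k))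
        refine ⟨⟨w k, hw0 k, u, u.ne_zero, hu.symm⟩, ?_⟩
        change (f k).rep ∈ Submodule.span ℂ (Set.range fun j' => fun r => B j r j')
        rw [← hu]
        exact Submodule.smul_mem _ _ (hspan k)
    rw [hrange, Set.ncard_range_of_injective hfi]
    simp

lemma coef_zero {d : ℕ} {a : Fin (d + 1) → ℂ} (h : ∀ v, ∑ k, a k * veron d v k = 0) : a = 0 := by
  have hli := veron_indep (n := d) (m := d + 1) le_rfl (fun i => ![(i : ℂ), 1])
    (fun i h => by have := congrFun h 1; simp at this)
    (fun i j hij => by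
      simp only [br]
      simp [sub_eq_zero, Fin.ext_iff] at hij ⊢
      exact hij)
  have hd : (Matrix.of fun i => veron d (![((i : Fin (d + 1)) : ℂ), 1])).det ≠ 0 := by
    have := Matrix.linearIndependent_rows_iff_isUnit.1
      (show LinearIndependent ℂ (Matrix.of fun i =>
        veron d (![((i : Fin (d + 1)) : ℂ), 1])).row from hli)
    exact ((Matrix.isUnit_iff_isUnit_det _).1 this).ne_zero
  apply Matrix.eq_zero_of_mulVec_eq_zero hd
  ext i
  simp only [Matrix.mulVec, dotProduct, Pi.zero_apply, Matrix.of_apply]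
  rw [← h ![(i : ℂ), 1]]
  exact Finset.sum_congr rfl fun _ _ => mul_comm _ _

lemma Q_to_core (hnv : ∀ j, 1 ≤ nv j) (e : Fin (n + 1) ≃ Ix nv)
    (P : Fin s → Matrix (Fin (n + 1)) (Fin 1) ℂ)
    (B : (j : Fin r) → Matrix (Fin (n + 1)) (Fin (nv j)) ℂ) (y : ℕ × Ix nv → ℂ)
    (hT : (TB e B).det ≠ 0) (hP : ∀ i, (fun a => P i a 0) ≠ 0)
    (H : ∃ C : Set (PP n), IsRNC n C ∧ (∀ i, projSet (P i) ⊆ C) ∧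
        ∀ j, (C ∩ projSet (B j)).ncard = nv j) : Core nv n s (XP e P B y) := by
  obtain ⟨C, ⟨M, hMu, rfl⟩, hpt, hsp⟩ := H
  set T := TB e B with hTdef
  have hTu : IsUnit T.det := Ne.isUnit hT
  set N := T⁻¹ * M with hN
  have hNu : IsUnit N.det := by
    rw [hN, Matrix.det_mul]
    exact (Matrix.isUnit_nonsing_inv_det _ hTu).mul hMu
  have hTN : ∀ z, M.mulVec z = T.mulVec (N.mulVec z) := by
    intro z
    rw [hN, Matrix.mulVec_mulVec, ← Matrix.mul_assoc, Matrix.mul_nonsing_inv _ hTu, Matrix.one_mul]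
  have hTinj : Function.Injective T.mulVec :=
    Matrix.mulVec_injective_iff_isUnit.2 ((Matrix.isUnit_iff_isUnit_det _).2 hTu)
  refine ⟨fun v o => N.mulVec (veron n v) (e.symm o), fun o => ?_, ?_, ?_, ?_⟩
  · exact isForm_of_coef (fun k => N (e.symm o) k)
  · intro ξ hξ
    have h1 : Matrix.vecMul (fun c => ξ (e c)) N = 0 := by
      apply coef_zero
      intro v
      have := hξ v
      rw [← Equiv.sum_comp e] at this
      simp only [Equiv.symm_apply_apply] at this
      change dotProduct (Matrix.vecMul (fun c => ξ (e c)) N) (veron n v) = 0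
      rw [← Matrix.dotProduct_mulVec]
      exact this
    have h2 := Matrix.eq_zero_of_vecMul_eq_zero hNu.ne_zero h1
    ext o
    have := congrFun h2 (e.symm o)
    simpa using this
  · intro i hi
    obtain ⟨u, hu⟩ := Projectivization.exists_smul_eq_mk_rep ℂ _ (hP ⟨i, hi⟩)
    have hmem : Projectivization.mk ℂ _ (hP ⟨i, hi⟩) ∈ projSet (P ⟨i, hi⟩) := by
      change (Projectivization.mk ℂ _ (hP ⟨i, hi⟩)).rep ∈
        Submodule.span ℂ (Set.range fun j' => fun r => P ⟨i, hi⟩ r j')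
      rw [← hu]
      exact Submodule.smul_mem _ _ (Submodule.subset_span ⟨0, rfl⟩)
    obtain ⟨v, hv, c, hc, hvc⟩ := hpt ⟨i, hi⟩ hmem
    rw [← hu] at hvc
    have h1 : (fun a => P ⟨i, hi⟩ a 0) = ((u : ℂ)⁻¹ * c) • M.mulVec (veron n v) := by
      rw [mul_smul, ← hvc, Units.smul_def, smul_smul, inv_mul_cancel₀ u.ne_zero, one_smul]
    refine ⟨v, hv, T.det * ((u : ℂ)⁻¹ * c), by simp [hc, hT], fun o => ?_⟩
    simp only [XP, hi, dif_pos]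
    rw [h1, hTN, Matrix.mulVec_smul, Matrix.mulVec_mulVec, Matrix.adjugate_mul, Matrix.smul_mulVec,
      Matrix.one_mulVec]
    simp only [Pi.smul_apply, smul_eq_mul]
    ring
  · intro j
    set S := ({P : PP n | ∃ v : Fin 2 → ℂ, v ≠ 0 ∧ ∃ c : ℂ, c ≠ 0 ∧
      P.rep = c • M.mulVec (veron n v)} ∩ projSet (B j)) with hS
    have hcard : S.ncard = nv j := hsp j
    have hfin : S.Finite := Set.finite_of_ncard_ne_zero (by have := hnv j; omega)
    haveI := hfin.fintype
    have hc2 : Fintype.card S = nv j := by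
      rw [← hcard, ← Nat.card_coe_set_eq, Nat.card_eq_fintype_card]
    let g := (Fintype.equivFinOfCardEq hc2).symm
    choose w hw0 c hc hw using fun k => (g k).2.1
    refine ⟨w, hw0, fun k l hkl hb => ?_, fun k o ho => ?_⟩
    · obtain ⟨d, hd, hdv⟩ := br_zero_iff (hw0 k) (hw0 l) hb
      apply hkl
      apply g.injective
      apply Subtype.ext
      rw [← (g k).1.mk_rep, ← (g l).1.mk_rep]
      refine (Projectivization.mk_eq_mk_iff' _ _ _ _ _).2 ⟨c k * d ^ n * (c l)⁻¹, ?_⟩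
      rw [hw k, hw l, hdv, veron_smul, Matrix.mulVec_smul, smul_smul, smul_smul]
      congr 1
      have := hc l
      field_simp
    · have h1 : (g k).1.rep ∈ Submodule.span ℂ (Set.range fun j' => fun r => B j r j') :=
        (g k).2.2
      rw [hw k, Submodule.smul_mem_iff _ (hc k), Submodule.mem_span_range_iff_exists_fun] at h1
      obtain ⟨z, hz⟩ := h1
      classical
      let z' : Ix nv → ℂ := fun o => o.elim 0
        (fun q => if h : q.1 = j then z (Fin.cast (by rw [h]) q.2) else 0)
      have hz' : ∀ o, (∀ t, o ≠ some ⟨j, t⟩) → z' o = 0 := by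
        intro o ho
        rcases o with _ | ⟨j', t⟩
        · rfl
        · simp only [z', Option.elim_some]
          rw [dif_neg]
          rintro rfl
          exact ho t rfl
      have h2 := TB_mulVec_block e B j z' hz'
      have h3 : ∑ t, z' (some ⟨j, t⟩) • (fun a => B j a t) = M.mulVec (veron n (w k)) := by
        rw [← hz]
        simp [z']
      rw [h3, hTN] at h2
      have h4 := hTinj h2
      have := congrFun h4 (e.symm o)
      change N.mulVec (veron n (w k)) (e.symm o) = 0
      rw [← this]
      simp [hz' o ho]

end
end

noncomputable section
open Finset

lemma IsForm.smul {d : ℕ} {h : (Fin 2 → ℂ) → ℂ} (H : IsForm d h) (c : ℂ) (v : Fin 2 → ℂ) :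
    h (c • v) = c ^ d * h v := by
  obtain ⟨a, ha⟩ := H.coef
  rw [ha, ha, veron_smul, Finset.mul_sum]
  refine Finset.sum_congr rfl fun k _ => ?_
  simp only [Pi.smul_apply, smul_eq_mul]
  ring

section
variable {r : ℕ} {nv : Fin r → ℕ} {n s : ℕ}

/-- projection of the `i`-th point to the span of block `j` and the remaining coordinate -/
def qv (x : ℕ × Ix nv → ℂ) (j : Fin r) (i : ℕ) : Fin (nv j + 1) → ℂ :=
  Fin.cons (x (i, none)) (fun k => x (i, some ⟨j, k⟩))

/-- the matrix of the first `nv j + 1` projected points -/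
def AM (x : ℕ × Ix nv → ℂ) (j : Fin r) : Matrix (Fin (nv j + 1)) (Fin (nv j + 1)) ℂ :=
  fun a k => qv x j k a

/-- coordinates of further points -/
def cf (x : ℕ × Ix nv → ℂ) (j : Fin r) (i : ℕ) (k : Fin (nv j + 1)) : ℂ :=
  (AM x j).cramer (qv x j i) k

lemma IsPF.qv (j : Fin r) (i : ℕ) (a : Fin (nv j + 1)) :
    IsPF (fun x : ℕ × Ix nv → ℂ => qv x j i a) := by
  refine Fin.cases ?_ (fun k => ?_) a
  · exact IsPF.coord _
  · exact IsPF.coord _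

lemma IsPF.AM (j : Fin r) (a b : Fin (nv j + 1)) :
    IsPF (fun x : ℕ × Ix nv → ℂ => AM x j a b) := IsPF.qv _ _ _

lemma IsPF.cf (j : Fin r) (i : ℕ) (k : Fin (nv j + 1)) :
    IsPF (fun x : ℕ × Ix nv → ℂ => cf x j i k) :=
  IsPF.cramer (IsPF.AM j) (IsPF.qv j i) k

lemma cf_sum (x : ℕ × Ix nv → ℂ) (j : Fin r) (i : ℕ) (a : Fin (nv j + 1)) :
    ∑ k, cf x j i k * qv x j k a = (AM x j).det * qv x j i a := by
  have := congrFun (Matrix.mulVec_cramer (AM x j) (qv x j i)) a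
  simp only [Matrix.mulVec, dotProduct, Pi.smul_apply, smul_eq_mul] at this
  rw [← this]
  exact Finset.sum_congr rfl fun k _ => mul_comm _ _

lemma cf_unique (x : ℕ × Ix nv → ℂ) (j : Fin r) (i : ℕ) (hd : (AM x j).det ≠ 0)
    (b : Fin (nv j + 1) → ℂ) (hb : ∀ a, qv x j i a = ∑ k, b k * qv x j k a) (k : Fin (nv j + 1)) :
    cf x j i k = (AM x j).det * b k := by
  have h1 : (AM x j).mulVec (fun k => cf x j i k - (AM x j).det * b k) = 0 := by
    ext a
    simp only [Matrix.mulVec, dotProduct, Pi.zero_apply]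
    have h2 := cf_sum x j i a
    rw [hb a, Finset.mul_sum] at h2
    rw [← sub_eq_zero, ← Finset.sum_sub_distrib] at h2
    rw [← h2]
    refine Finset.sum_congr rfl fun k _ => ?_
    simp only [AM]; ring
  have := congrFun (Matrix.eq_zero_of_mulVec_eq_zero hd h1) k
  simpa [sub_eq_zero] using this

lemma core_nodes (hn : n = ∑ j, nv j) (e : Fin (n + 1) ≃ Ix nv) {x : ℕ × Ix nv → ℂ}
    (H : Core nv n s x) (p0 : Ix nv) (ha : ∀ i < s, x (i, none) ≠ 0)
    (hx : ∀ i < s, ∀ k < s, i ≠ k → x (i, none) * x (k, p0) - x (k, none) * x (i, p0) ≠ 0) :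
    ∃ τ : ℕ → Fin 2 → ℂ, (∀ i < s, ∀ k < s, i ≠ k → br (τ i) (τ k) ≠ 0) ∧
      ∀ j, nv j + 1 ≤ s → (AM x j).det ≠ 0 → ∃ θ : Fin (nv j + 1) → ℂ, (∀ k, θ k ≠ 0) ∧
        ∀ i, nv j < i → i < s → ∃ ρ : ℂ, ρ ≠ 0 ∧
          ∀ k : Fin (nv j + 1), cf x j i k * br (τ i) (τ k) = ρ * θ k := by
  classical
  obtain ⟨Φ, hΦ, hind, hpt, hsp⟩ := H
  have hpt' : ∀ i, ∃ v, i < s → v ≠ 0 ∧ ∃ c : ℂ, c ≠ 0 ∧ ∀ o, x (i, o) = c * Φ v o := by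
    intro i
    by_cases hi : i < s
    · obtain ⟨v, h⟩ := hpt i hi
      exact ⟨v, fun _ => h⟩
    · exact ⟨0, fun h => absurd h hi⟩
  choose τ hτ using hpt'
  have hpt'' : ∀ i, ∃ c : ℂ, i < s → c ≠ 0 ∧ ∀ o, x (i, o) = c * Φ (τ i) o := by
    intro i
    by_cases hi : i < s
    · obtain ⟨c, h⟩ := (hτ i hi).2
      exact ⟨c, fun _ => h⟩
    · exact ⟨0, fun h => absurd h hi⟩
  choose γ hγ using hpt''
  choose W hW0 hWb hWΦ using hsp
  -- nonvanishing
  have hnz : ∀ v, v ≠ 0 → ¬ ∀ o, Φ v o = 0 := by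
    intro v hv hall
    choose a ha using fun o => (hΦ o).coef
    set M' : Matrix (Fin (n + 1)) (Fin (n + 1)) ℂ := fun c k => a (e c) k with hM'
    have hM'v : ∀ v, M'.mulVec (veron n v) = fun c => Φ v (e c) := by
      intro v; ext c
      simp only [Matrix.mulVec, dotProduct, hM']
      rw [ha]
    have hM'd : M'.det ≠ 0 := by
      intro h0
      obtain ⟨ξ, hξ, hξ'⟩ := Matrix.exists_vecMul_eq_zero_iff.2 h0
      apply hξ
      have := hind (fun o => ξ (e.symm o)) (fun v => by
        rw [← Equiv.sum_comp e]
        simp only [Equiv.symm_apply_apply]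
        have h1 : dotProduct ξ (M'.mulVec (veron n v)) = 0 := by
          rw [Matrix.dotProduct_mulVec, hξ']; simp
        rw [hM'v] at h1
        exact h1)
      ext c
      have := congrFun this (e c)
      simpa using this
    refine veron_ne hv (Matrix.eq_zero_of_mulVec_eq_zero hM'd ?_)
    rw [hM'v]
    ext c
    exact hall _
  have hΦn : ∀ i < s, Φ (τ i) none ≠ 0 := by
    intro i hi h
    apply ha i hi
    rw [(hγ i hi).2, h, mul_zero]
  have hττ : ∀ i < s, ∀ k < s, i ≠ k → br (τ i) (τ k) ≠ 0 := by
    intro i hi k hk hik h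
    obtain ⟨c, hc, hcv⟩ := br_zero_iff (hτ i hi).1 (hτ k hk).1 h
    apply hx i hi k hk hik
    rw [(hγ i hi).2, (hγ i hi).2, (hγ k hk).2, (hγ k hk).2, hcv, (hΦ none).smul, (hΦ p0).smul]
    ring
  have hτW : ∀ i < s, ∀ j k, br (τ i) (W j k) ≠ 0 := by
    intro i hi j k h
    obtain ⟨c, hc, hcv⟩ := br_zero_iff (hτ i hi).1 (hW0 j k) h
    apply hΦn i hi
    rw [hcv, (hΦ none).smul, hWΦ j k none (by simp), mul_zero]
  have hWW : ∀ j k j' k', j ≠ j' → br (W j k) (W j' k') ≠ 0 := by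
    intro j k j' k' hjj h
    obtain ⟨c, hc, hcv⟩ := br_zero_iff (hW0 j k) (hW0 j' k') h
    apply hnz _ (hW0 j k)
    intro o
    by_cases ho : ∀ t, o ≠ some ⟨j, t⟩
    · exact hWΦ j k o ho
    · push Not at ho
      obtain ⟨t, rfl⟩ := ho
      rw [hcv, (hΦ _).smul, hWΦ j' k' _ ?_, mul_zero]
      intro t' ht'
      simp only [Option.some.injEq, Sigma.mk.injEq] at ht'
      exact hjj ht'.1
  refine ⟨τ, hττ, fun j hjs hdet => ?_⟩
  let K := Fin (nv j + 1) ⊕ {q : (j : Fin r) × Fin (nv j) // q.1 ≠ j}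
  let z : K → Fin 2 → ℂ := Sum.elim (fun k => τ k) (fun q => W q.1.1 q.1.2)
  have hK : Fintype.card K = n + 1 := by
    have h1 : Fintype.card {q : (j : Fin r) × Fin (nv j) // q.1 = j} = nv j := by
      rw [← Fintype.card_fin (nv j)]
      refine Fintype.card_congr ⟨fun q => Fin.cast (by rw [q.2]) q.1.2, fun k => ⟨⟨j, k⟩, rfl⟩,
        ?_, ?_⟩
      · rintro ⟨⟨j', k⟩, rfl⟩; rfl
      · intro k; rfl
    have h2 := Fintype.card_subtype_compl (fun q : (j : Fin r) × Fin (nv j) => q.1 = j)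
    have h3 : Fintype.card ((j : Fin r) × Fin (nv j)) = n := by simp [hn]
    have h4 := Fintype.card_subtype_le (fun q : (j : Fin r) × Fin (nv j) => q.1 = j)
    simp only [K, Fintype.card_sum, Fintype.card_fin]
    change nv j + 1 + Fintype.card {q : (j : Fin r) × Fin (nv j) // ¬ q.1 = j} = n + 1
    omega
  have hz : ∀ i k, i ≠ k → br (z i) (z k) ≠ 0 := by
    rintro (i | ⟨⟨j1, k1⟩, h1⟩) (k | ⟨⟨j2, k2⟩, h2⟩) hik
    · exact hττ _ (by omega) _ (by omega) (fun h => hik (by congr 1; exact Fin.ext h))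
    · exact hτW _ (by omega) _ _
    · rw [br_swap]; exact neg_ne_zero.2 (hτW _ (by omega) _ _)
    · by_cases hj : j1 = j2
      · subst hj
        exact hWb _ _ _ (fun h => hik (by have h : k1 = k2 := h; subst h; rfl))
      · exact hWW _ _ _ _ hj
  have hD : ∀ k, ∏ l ∈ univ.erase k, br (z k) (z l) ≠ 0 := fun k =>
    Finset.prod_ne_zero_iff.2 fun l hl => hz _ _ (Finset.ne_of_mem_erase hl).symm
  refine ⟨fun k => (γ k * ∏ l ∈ univ.erase (Sum.inl k : K), br (z (Sum.inl k)) (z l))⁻¹,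
    fun k => inv_ne_zero (mul_ne_zero (hγ k (by omega)).1 (hD _)), fun i hi his => ?_⟩
  have hzi : ∀ l : K, br (τ i) (z l) ≠ 0 := by
    rintro (k | ⟨⟨j2, k2⟩, h2⟩)
    · exact hττ _ his _ (by omega) (by omega)
    · exact hτW _ his _ _
  refine ⟨(AM x j).det * γ i * ∏ l : K, br (τ i) (z l),
    mul_ne_zero (mul_ne_zero hdet (hγ i his).1) (Finset.prod_ne_zero_iff.2 fun l _ => hzi l),
    fun k => ?_⟩
  rw [cf_unique x j i hdet (fun k => γ i / (γ k *
    ∏ l ∈ univ.erase (Sum.inl k : K), br (z (Sum.inl k)) (z l)) *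
      ∏ l ∈ univ.erase (Sum.inl k : K), br (τ i) (z l))]
  · rw [← Finset.mul_prod_erase univ _ (Finset.mem_univ (Sum.inl k : K))]
    simp only [z, Sum.elim_inl]
    rw [div_eq_mul_inv]
    ring
  · have hgen : ∀ o, (o = none ∨ ∃ t, o = some ⟨j, t⟩) → x (i, o) =
        ∑ k : Fin (nv j + 1), (γ i / (γ k *
    ∏ l ∈ univ.erase (Sum.inl k : K), br (z (Sum.inl k)) (z l)) *
      ∏ l ∈ univ.erase (Sum.inl k : K), br (τ i) (z l)) * x (k, o) := by
      intro o ho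
      rw [(hγ i his).2, (hΦ o).lagrange hK z hz (τ i), Fintype.sum_sum_type]
      have : ∑ q : {q : (j : Fin r) × Fin (nv j) // q.1 ≠ j}, Φ (z (Sum.inr q)) o /
          (∏ l ∈ univ.erase (Sum.inr q : K), br (z (Sum.inr q)) (z l)) *
          ∏ l ∈ univ.erase (Sum.inr q : K), br (τ i) (z l) = 0 := by
        refine Finset.sum_eq_zero fun q _ => ?_
        have : Φ (z (Sum.inr q)) o = 0 := by
          apply hWΦ
          rintro t rfl
          rcases ho with ho | ⟨t', ho⟩
          · simp at ho
          · simp only [Option.some.injEq, Sigma.mk.injEq] at ho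
            exact q.2 ho.1
        rw [this]; simp
      rw [this, add_zero, Finset.mul_sum]
      refine Finset.sum_congr rfl fun k _ => ?_
      have h1 := (hγ k (by omega)).1
      rw [(hγ k (by omega)).2 o]
      simp only [z, Sum.elim_inl]
      field_simp
      rfl
    intro a
    refine Fin.cases ?_ (fun t => ?_) a
    · exact hgen none (Or.inl rfl)
    · exact hgen (some ⟨j, t⟩) (Or.inr ⟨t, rfl⟩)

end
end

noncomputable section
open Finset

section
variable {r : ℕ} {nv : Fin r → ℕ} {n s : ℕ}

/-- index type of the parameter space -/
abbrev Sg (n s : ℕ) (nv : Fin r → ℕ) :=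
  ((Fin s × Fin (n + 1) × Fin 1) ⊕ ((j : Fin r) × (Fin (n + 1) × Fin (nv j))))

/-- points from parameters -/
def Pw (w : Sg n s nv → ℂ) : Fin s → Matrix (Fin (n + 1)) (Fin 1) ℂ :=
  fun i a b => w (Sum.inl (i, a, b))

/-- spaces from parameters -/
def Bw (w : Sg n s nv → ℂ) : (j : Fin r) → Matrix (Fin (n + 1)) (Fin (nv j)) ℂ :=
  fun j a k => w (Sum.inr ⟨j, (a, k)⟩)

lemma IsPF.TB (e : Fin (n + 1) ≃ Ix nv) (a c : Fin (n + 1)) :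
    IsPF (fun w : Sg n s nv → ℂ => TB e (Bw w) a c) := by
  unfold _root_.TB
  rcases e c with _ | o
  · exact IsPF.const _
  · exact IsPF.coord _

lemma IsPF.XP (e : Fin (n + 1) ≃ Ix nv) (y : ℕ × Ix nv → ℂ) (q : ℕ × Ix nv) :
    IsPF (fun w : Sg n s nv → ℂ => XP e (Pw w) (Bw w) y q) := by
  unfold _root_.XP
  by_cases h : q.1 < s
  · simp only [h, dif_pos, Matrix.mulVec, dotProduct]
    exact IsPF.sum _ fun k => (IsPF.adjugate (IsPF.TB e) _ _).mul (IsPF.coord _)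
  · simp only [h, dif_neg, not_false_eq_true]
    exact IsPF.const _

/-- the parameter of a configuration with standard subspaces -/
def w0 (s : ℕ) (e : Fin (n + 1) ≃ Ix nv) (x : ℕ × Ix nv → ℂ) : Sg n s nv → ℂ :=
  Sum.elim (fun q => x (q.1, e q.2.1)) (fun q => if e q.2.1 = some ⟨q.1, q.2.2⟩ then 1 else 0)

lemma TB_w0 (e : Fin (n + 1) ≃ Ix nv) (x : ℕ × Ix nv → ℂ) :
    TB e (Bw (w0 s e x)) = 1 := by
  ext a c
  simp only [TB, Bw, w0, Sum.elim_inr, Matrix.one_apply]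
  rcases h : e c with _ | o
  · simp
  · have : (a = c) ↔ e a = some o := by rw [← h]; simp
    simp [this]

lemma XP_w0 (e : Fin (n + 1) ≃ Ix nv) (x : ℕ × Ix nv → ℂ) :
    XP e (Pw (w0 s e x)) (Bw (w0 s e x)) x = x := by
  ext q
  simp only [XP, TB_w0]
  split_ifs with h
  · simp [Pw, w0]
  · rfl

lemma gen_of_core (hn : 1 ≤ n) (e : Fin (n + 1) ≃ Ix nv) (g : (ℕ × Ix nv → ℂ) → ℂ) (hg : IsPF g)
    (hex : ∃ x, g x ≠ 0) (hc : ∀ x, g x ≠ 0 → Core nv n s x) :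
    GenHoldsPtsSpaces n s r nv fun P B =>
      ∃ C : Set (PP n), IsRNC n C ∧ (∀ i, projSet (P i) ⊆ C) ∧
        ∀ j, (C ∩ projSet (B j)).ncard = nv j := by
  obtain ⟨x, hx⟩ := hex
  obtain ⟨F, hF⟩ := (IsPF.det (IsPF.TB (s := s) e)).mul (hg.comp (IsPF.XP (s := s) e x))
  refine ⟨F, ?_, ?_⟩
  · rintro rfl
    have := hF (w0 s e x)
    simp only [TB_w0, XP_w0] at this
    simp at this
    exact hx this
  · intro P B _ _ h
    have := hF (Sum.elim (fun q => P q.1 q.2.1 q.2.2) (fun q => B q.1 q.2.1 q.2.2))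
    rw [← this] at h
    exact core_to_Q hn e P B x (left_ne_zero_of_mul h) (hc _ (right_ne_zero_of_mul h))

lemma not_gen (hnv : ∀ j, 1 ≤ nv j) (e : Fin (n + 1) ≃ Ix nv)
    (p0 : (j : Fin r) × Fin (nv j))
    (g : (ℕ × Ix nv → ℂ) → ℂ) (hg : IsPF g)
    (hex : ∃ x, g x ≠ 0) (hc : ∀ x, Core nv n s x → (∀ i < s, x (i, none) ≠ 0) →
      (∀ i < s, ∀ k < s, i ≠ k → x (i, none) * x (k, some p0) - x (k, none) * x (i, some p0) ≠ 0) →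
      g x = 0) :
    ¬ GenHoldsPtsSpaces n s r nv fun P B =>
      ∃ C : Set (PP n), IsRNC n C ∧ (∀ i, projSet (P i) ⊆ C) ∧
        ∀ j, (C ∩ projSet (B j)).ncard = nv j := by
  classical
  rintro ⟨F, hF0, hF⟩
  let N1 : (ℕ × Ix nv → ℂ) → ℂ := fun x => ∏ i ∈ range s, x (i, none)
  let N2 : (ℕ × Ix nv → ℂ) → ℂ := fun x => ∏ i ∈ range s, ∏ k ∈ (range s).erase i,
    (x (i, none) * x (k, some p0) - x (k, none) * x (i, some p0))
  have hN1 : IsPF N1 := IsPF.prod _ fun i => IsPF.coord _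
  have hN2 : IsPF N2 := IsPF.prod _ fun i => IsPF.prod _ fun k =>
    ((IsPF.coord _).mul (IsPF.coord _)).sub ((IsPF.coord _).mul (IsPF.coord _))
  have hN : ∃ x, N1 x * N2 x ≠ 0 := by
    refine ⟨fun q => if q.2 = none then 1 else q.1, ?_⟩
    refine mul_ne_zero (by simp [N1]) ?_
    simp only [N2]
    refine prod_ne_zero_iff.2 fun i hi => prod_ne_zero_iff.2 fun k hk => ?_
    have := ne_of_mem_erase hk
    simp [sub_eq_zero, this]
  obtain ⟨x, hx⟩ := hg.joint (hN1.mul hN2) hex hN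
  have hG := (hg.mul (hN1.mul hN2)).comp (IsPF.XP (s := s) e x)
  have hT := IsPF.det (IsPF.TB (s := s) e)
  have h1 : ∃ w : Sg n s nv → ℂ, (TB e (Bw w)).det * (g (XP e (Pw w) (Bw w) x) *
    (N1 (XP e (Pw w) (Bw w) x) * N2 (XP e (Pw w) (Bw w) x))) ≠ 0 := by
    refine ⟨w0 s e x, ?_⟩
    rw [TB_w0, XP_w0]
    simpa using hx
  have hFp : IsPF (fun w : Sg n s nv → ℂ => MvPolynomial.eval w F) := ⟨F, fun _ => rfl⟩
  have hFe : ∃ w : Sg n s nv → ℂ, MvPolynomial.eval w F ≠ 0 := by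
    by_contra! h
    exact hF0 (MvPolynomial.funext fun w => by simpa using h w)
  obtain ⟨w, hw⟩ := hFp.joint (hT.mul hG) hFe h1
  have hwF := left_ne_zero_of_mul hw
  have hw2 := right_ne_zero_of_mul hw
  have hwT := left_ne_zero_of_mul hw2
  have hw3 := right_ne_zero_of_mul hw2
  have hwg := left_ne_zero_of_mul hw3
  have hwN1 := left_ne_zero_of_mul (right_ne_zero_of_mul hw3)
  have hwN2 := right_ne_zero_of_mul (right_ne_zero_of_mul hw3)
  have ha : ∀ i < s, XP e (Pw w) (Bw w) x (i, none) ≠ 0 := fun i hi =>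
    prod_ne_zero_iff.1 hwN1 i (mem_range.2 hi)
  have hP : ∀ i, (fun a => Pw w i a 0) ≠ 0 := by
    intro i h
    apply ha i i.2
    simp only [XP, i.2, dif_pos]
    have : (fun a => Pw w ⟨i, i.2⟩ a 0) = 0 := h
    rw [this]
    simp
  refine hwg (hc _ (Q_to_core hnv e (Pw w) (Bw w) x hwT hP (hF (Pw w) (Bw w) ?_ ?_ ?_)) ha ?_)
  · intro i
    have h3 : LinearIndependent ℂ (Pw w i).transpose.row :=
      LinearIndependent.of_subsingleton (0 : Fin 1) (hP i)
    rw [← Matrix.rank_transpose, h3.rank_matrix]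
    simp
  · intro j
    have h1 : LinearIndependent ℂ (TB e (Bw w)).col :=
      Matrix.linearIndependent_cols_iff_isUnit.2
        ((Matrix.isUnit_iff_isUnit_det _).2 (Ne.isUnit hwT))
    have h2 := h1.comp (fun k : Fin (nv j) => e.symm (some ⟨j, k⟩)) (by
      intro a b h
      simpa using h)
    have h3 : LinearIndependent ℂ (Bw w j).transpose.row := by
      convert h2 using 1
      ext k a
      change Bw w j a k = TB e (Bw w) a (e.symm (some ⟨j, k⟩))
      simp [TB]
    rw [← Matrix.rank_transpose, h3.rank_matrix]
    simp
  · have : (Sum.elim (fun q => Pw w q.1 q.2.1 q.2.2) fun q => Bw w q.1 q.2.1 q.2.2) = w := by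
      funext q
      rcases q with q | q <;> rfl
    rw [this]
    exact hwF
  · intro i hi k hk hik
    exact prod_ne_zero_iff.1 (prod_ne_zero_iff.1 hwN2 i (mem_range.2 hi)) k
      (mem_erase.2 ⟨hik.symm, mem_range.2 hk⟩)

end
end

noncomputable section
open Finset

section
variable {r : ℕ} {nv : Fin r → ℕ} {n s : ℕ}

/-- example configurations -/
def xE (nv : Fin r → ℕ) (m : ℕ) (E : ℕ → Fin r → ℕ → ℂ) : ℕ × Ix nv → ℂ :=
  fun q => q.2.elim (if q.1 = 0 ∨ m < q.1 then 1 else 0)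
    (fun o => if m < q.1 then E q.1 o.1 o.2 else if q.1 = o.2 + 1 then 1 else 0)

lemma AM_xE (m : ℕ) (E : ℕ → Fin r → ℕ → ℂ) (j : Fin r) (hj : nv j ≤ m) :
    AM (xE nv m E) j = 1 := by
  ext a k
  have hk : ¬ m < (k : ℕ) := by omega
  simp only [AM, Matrix.one_apply]
  refine Fin.cases ?_ (fun t => ?_) a
  · simp only [qv, Fin.cons_zero, xE, Option.elim_none, hk, or_false]
    simp only [eq_comm, Fin.ext_iff, Fin.val_zero]
  · simp only [qv, Fin.cons_succ, xE, Option.elim_some, hk, if_false]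
    simp only [eq_comm, Fin.ext_iff, Fin.val_succ]

lemma cf_xE0 (m : ℕ) (E : ℕ → Fin r → ℕ → ℂ) (j : Fin r) (hj : nv j ≤ m) (i : ℕ) (hi : m < i) :
    cf (xE nv m E) j i 0 = 1 := by
  rw [cf, AM_xE m E j hj, Matrix.cramer_one]
  simp [qv, xE, hi]

lemma cf_xE (m : ℕ) (E : ℕ → Fin r → ℕ → ℂ) (j : Fin r) (hj : nv j ≤ m) (i : ℕ) (hi : m < i)
    (t : ℕ) (ht : t + 1 < nv j + 1) :
    cf (xE nv m E) j i ⟨t + 1, ht⟩ = E i j t := by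
  rw [cf, AM_xE m E j hj, Matrix.cramer_one]
  have : (⟨t + 1, ht⟩ : Fin (nv j + 1)) = Fin.succ ⟨t, by omega⟩ := rfl
  rw [this]
  simp only [Module.End.one_apply, qv, Fin.cons_succ, xE, Option.elim_some, hi, if_true]

lemma obstr_a (hnv : ∀ j, 1 ≤ nv j) (hn : n = ∑ j, nv j) (e : Fin (n + 1) ≃ Ix nv)
    (j0 j1 : Fin r) (hj : j0 ≠ j1) (h01 : nv j0 ≤ nv j1) (hs : nv j1 + 3 ≤ s) :
    ¬ GenHoldsPtsSpaces n s r nv fun P B =>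
      ∃ C : Set (PP n), IsRNC n C ∧ (∀ i, projSet (P i) ⊆ C) ∧
        ∀ j, (C ∩ projSet (B j)).ncard = nv j := by
  have h0 := hnv j0
  have h1 := hnv j1
  set m := nv j1 with hm
  let o0 : Fin (nv j0 + 1) := ⟨0 + 1, by omega⟩
  let o1 : Fin (nv j1 + 1) := ⟨0 + 1, by omega⟩
  refine not_gen hnv e ⟨j0, ⟨0, h0⟩⟩ (fun x => ((AM x j0).det * (AM x j1).det) *
    (cf x j0 (m + 1) 0 * cf x j0 (m + 2) o0 * (cf x j1 (m + 1) o1 * cf x j1 (m + 2) 0) -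
     cf x j0 (m + 1) o0 * cf x j0 (m + 2) 0 * (cf x j1 (m + 1) 0 * cf x j1 (m + 2) o1))) ?_ ?_ ?_
  · refine ((IsPF.det (IsPF.AM _)).mul (IsPF.det (IsPF.AM _))).mul (IsPF.sub ?_ ?_)
    · exact ((IsPF.cf _ _ _).mul (IsPF.cf _ _ _)).mul ((IsPF.cf _ _ _).mul (IsPF.cf _ _ _))
    · exact ((IsPF.cf _ _ _).mul (IsPF.cf _ _ _)).mul ((IsPF.cf _ _ _).mul (IsPF.cf _ _ _))
  · refine ⟨xE nv m (fun i j _ => if i = m + 1 then (if j = j0 then 0 else 1)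
      else (if j = j0 then 1 else 0)), ?_⟩
    rw [AM_xE _ _ _ h01, AM_xE _ _ _ le_rfl]
    rw [cf_xE0 _ _ _ h01 _ (by omega), cf_xE0 _ _ _ h01 _ (by omega),
      cf_xE0 _ _ _ le_rfl _ (by omega), cf_xE0 _ _ _ le_rfl _ (by omega),
      cf_xE _ _ _ h01 _ (by omega), cf_xE _ _ _ h01 _ (by omega),
      cf_xE _ _ _ le_rfl _ (by omega), cf_xE _ _ _ le_rfl _ (by omega)]
    simp [hj.symm]
  · intro x hC ha hx
    by_contra hne
    have hd0 := left_ne_zero_of_mul (left_ne_zero_of_mul hne)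
    have hd1 := right_ne_zero_of_mul (left_ne_zero_of_mul hne)
    have hg := right_ne_zero_of_mul hne
    apply hg
    obtain ⟨τ, hτ, H⟩ := core_nodes hn e hC _ ha hx
    obtain ⟨θ, hθ, Hθ⟩ := H j0 (by omega) hd0
    obtain ⟨φ, hφ, Hφ⟩ := H j1 (by omega) hd1
    obtain ⟨ρ1, hρ1, H1⟩ := Hθ (m + 1) (by omega) (by omega)
    obtain ⟨ρ2, hρ2, H2⟩ := Hθ (m + 2) (by omega) (by omega)
    obtain ⟨ρ3, hρ3, H3⟩ := Hφ (m + 1) (by omega) (by omega)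
    obtain ⟨ρ4, hρ4, H4⟩ := Hφ (m + 2) (by omega) (by omega)
    have a1 := H1 0
    have a2 := H1 o0
    have a3 := H2 0
    have a4 := H2 o0
    have b1 := H3 0
    have b2 := H3 o1
    have b3 := H4 0
    have b4 := H4 o1
    have n1 := hτ (m + 1) (by omega) 0 (by omega) (by omega)
    have n2 := hτ (m + 1) (by omega) 1 (by omega) (by omega)
    have n3 := hτ (m + 2) (by omega) 0 (by omega) (by omega)
    have n4 := hτ (m + 2) (by omega) 1 (by omega) (by omega)
    simp only [o0, o1, Fin.val_zero, zero_add] at a1 a2 a3 a4 b1 b2 b3 b4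
    simp only [o0, o1, zero_add]
    rw [← eq_div_iff n1] at a1 b1
    rw [← eq_div_iff n2] at a2 b2
    rw [← eq_div_iff n3] at a3 b3
    rw [← eq_div_iff n4] at a4 b4
    rw [a1, a2, a3, a4, b1, b2, b3, b4]
    field_simp
    ring

lemma obstr_b (hnv : ∀ j, 1 ≤ nv j) (hn : n = ∑ j, nv j) (e : Fin (n + 1) ≃ Ix nv)
    (j0 : Fin r) (h2 : 2 ≤ nv j0) (hs : nv j0 + 4 ≤ s) :
    ¬ GenHoldsPtsSpaces n s r nv fun P B =>
      ∃ C : Set (PP n), IsRNC n C ∧ (∀ i, projSet (P i) ⊆ C) ∧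
        ∀ j, (C ∩ projSet (B j)).ncard = nv j := by
  set m := nv j0 with hm
  let k1 : Fin (nv j0 + 1) := ⟨0 + 1, by omega⟩
  let k2 : Fin (nv j0 + 1) := ⟨1 + 1, by omega⟩
  let D : (ℕ × Ix nv → ℂ) → Fin (nv j0 + 1) → ℂ := fun x k => cf x j0 (m + 2) k * cf x j0 (m + 3) k
  let D' : (ℕ × Ix nv → ℂ) → Fin (nv j0 + 1) → ℂ := fun x k => cf x j0 (m + 1) k * cf x j0 (m + 3) k
  let D'' : (ℕ × Ix nv → ℂ) → Fin (nv j0 + 1) → ℂ := fun x k =>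
    cf x j0 (m + 1) k * cf x j0 (m + 2) k
  have hD : ∀ k, IsPF (fun x => D x k) := fun k => (IsPF.cf _ _ _).mul (IsPF.cf _ _ _)
  have hD' : ∀ k, IsPF (fun x => D' x k) := fun k => (IsPF.cf _ _ _).mul (IsPF.cf _ _ _)
  have hD'' : ∀ k, IsPF (fun x => D'' x k) := fun k => (IsPF.cf _ _ _).mul (IsPF.cf _ _ _)
  refine not_gen hnv e ⟨j0, ⟨0, by omega⟩⟩ (fun x => (AM x j0).det *
    (D x 0 * (D' x k1 * D'' x k2 - D'' x k1 * D' x k2) -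
     D' x 0 * (D x k1 * D'' x k2 - D'' x k1 * D x k2) +
     D'' x 0 * (D x k1 * D' x k2 - D' x k1 * D x k2))) ?_ ?_ ?_
  · refine (IsPF.det (IsPF.AM _)).mul (IsPF.add (IsPF.sub ?_ ?_) ?_)
    · exact (hD _).mul (((hD' _).mul (hD'' _)).sub ((hD'' _).mul (hD' _)))
    · exact (hD' _).mul (((hD _).mul (hD'' _)).sub ((hD'' _).mul (hD _)))
    · exact (hD'' _).mul (((hD _).mul (hD' _)).sub ((hD' _).mul (hD _)))
  · refine ⟨xE nv m (fun i j t => if i = m + 1 then 1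
      else if i = m + 2 then (if t = 0 then 2 else 3) else (if t = 0 then 3 else 2)), ?_⟩
    simp only [D, D', D'']
    rw [AM_xE _ _ _ le_rfl]
    rw [cf_xE0 _ _ _ le_rfl _ (by omega), cf_xE0 _ _ _ le_rfl _ (by omega),
      cf_xE0 _ _ _ le_rfl _ (by omega),
      cf_xE _ _ _ le_rfl _ (by omega), cf_xE _ _ _ le_rfl _ (by omega),
      cf_xE _ _ _ le_rfl _ (by omega), cf_xE _ _ _ le_rfl _ (by omega),
      cf_xE _ _ _ le_rfl _ (by omega), cf_xE _ _ _ le_rfl _ (by omega)]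
    simp
    norm_num
  · intro x hC ha hx
    by_contra hne
    have hd0 := left_ne_zero_of_mul hne
    have hg := right_ne_zero_of_mul hne
    apply hg
    obtain ⟨τ, hτ, H⟩ := core_nodes hn e hC _ ha hx
    obtain ⟨θ, hθ, Hθ⟩ := H j0 (by omega) hd0
    obtain ⟨ρ1, hρ1, H1⟩ := Hθ (m + 1) (by omega) (by omega)
    obtain ⟨ρ2, hρ2, H2⟩ := Hθ (m + 2) (by omega) (by omega)
    obtain ⟨ρ3, hρ3, H3⟩ := Hθ (m + 3) (by omega) (by omega)
    have key : ∀ k : Fin (nv j0 + 1), ∃ u : ℂ, D x k = ρ2 * ρ3 * u * br (τ (m + 1)) (τ k) ∧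
        D' x k = ρ1 * ρ3 * u * br (τ (m + 2)) (τ k) ∧
        D'' x k = ρ1 * ρ2 * u * br (τ (m + 3)) (τ k) := by
      intro k
      have a1 := H1 k
      have a2 := H2 k
      have a3 := H3 k
      have n1 := hτ (m + 1) (by omega) k (by omega) (by omega)
      have n2 := hτ (m + 2) (by omega) k (by omega) (by omega)
      have n3 := hτ (m + 3) (by omega) k (by omega) (by omega)
      rw [← eq_div_iff n1] at a1
      rw [← eq_div_iff n2] at a2
      rw [← eq_div_iff n3] at a3
      refine ⟨θ k ^ 2 / (br (τ (m + 1)) (τ k) * br (τ (m + 2)) (τ k) * br (τ (m + 3)) (τ k)),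
        ?_, ?_, ?_⟩
      · simp only [D]; rw [a2, a3]; field_simp
      · simp only [D']; rw [a1, a3]; field_simp
      · simp only [D'']; rw [a1, a2]; field_simp
    obtain ⟨u0, p1, p2, p3⟩ := key 0
    obtain ⟨u1, q1, q2, q3⟩ := key k1
    obtain ⟨u2, r1, r2, r3⟩ := key k2
    rw [p1, p2, p3, q1, q2, q3, r1, r2, r3]
    simp only [br]
    ring

end
end

noncomputable section
open Finset

section
variable {r : ℕ} {nv : Fin r → ℕ} {n s : ℕ}

/-- interpolation coefficients -/
def al (x : ℕ × Ix nv → ℂ) (τ : ℕ → Fin 2 → ℂ) (j : Fin r) (k : Fin (nv j + 1)) : ℂ :=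
  cf x j (nv j + 1) k * br (τ (nv j + 1)) (τ k)

/-- the block curve -/
def Hf (x : ℕ × Ix nv → ℂ) (τ : ℕ → Fin 2 → ℂ) (j : Fin r) (v : Fin 2 → ℂ) (a : Fin (nv j + 1)) :
    ℂ :=
  ∑ k : Fin (nv j + 1), al x τ j k * qv x j k a * ∏ l ∈ univ.erase k, br v (τ l)

/-- dehomogenized equation of the block hyperplane -/
def pp (x : ℕ × Ix nv → ℂ) (τ : ℕ → Fin 2 → ℂ) (j : Fin r) : Polynomial ℂ :=
  ∑ k : Fin (nv j + 1), Polynomial.C (al x τ j k * x (k, none)) *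
    ∏ l ∈ univ.erase k, (Polynomial.C (τ (l : ℕ) 1) * Polynomial.X - Polynomial.C (τ (l : ℕ) 0))

lemma pp_eval (x : ℕ × Ix nv → ℂ) (τ : ℕ → Fin 2 → ℂ) (j : Fin r) (t : ℂ) :
    (pp x τ j).eval t = Hf x τ j ![t, 1] 0 := by
  simp only [pp, Hf, Polynomial.eval_finsetSum, Polynomial.eval_mul, Polynomial.eval_C,
    Polynomial.eval_prod, Polynomial.eval_sub, Polynomial.eval_X, br, Matrix.cons_val_zero,
    Matrix.cons_val_one, qv, Fin.cons_zero]
  refine Finset.sum_congr rfl fun k _ => ?_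
  congr 1
  refine Finset.prod_congr rfl fun l _ => ?_
  ring

lemma pp_deg (x : ℕ × Ix nv → ℂ) (τ : ℕ → Fin 2 → ℂ) (j : Fin r) :
    (pp x τ j).natDegree ≤ nv j := by
  refine Polynomial.natDegree_sum_le_of_forall_le _ _ fun k _ => ?_
  refine (Polynomial.natDegree_C_mul_le _ _).trans ?_
  refine (Polynomial.natDegree_prod_le _ _).trans ?_
  refine (Finset.sum_le_card_nsmul _ _ 1 fun l _ => ?_).trans ?_
  · refine (Polynomial.natDegree_sub_le _ _).trans ?_
    simp only [Polynomial.natDegree_C, max_le_iff, Nat.zero_le, and_true]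
    exact (Polynomial.natDegree_C_mul_le _ _).trans Polynomial.natDegree_X_le
  · simp

lemma isForm_Hf (x : ℕ × Ix nv → ℂ) (τ : ℕ → Fin 2 → ℂ) (j : Fin r) (a : Fin (nv j + 1)) :
    IsForm (nv j) (fun v => Hf x τ j v a) := by
  refine IsForm.sum _ fun k _ => IsForm.cmul ?_ _
  have := isForm_prod_br (univ.erase k) (fun l : Fin (nv j + 1) => τ l)
  simpa using this

lemma Hf_lo (x : ℕ × Ix nv → ℂ) (τ : ℕ → Fin 2 → ℂ) (j : Fin r) (i : Fin (nv j + 1))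
    (a : Fin (nv j + 1)) :
    Hf x τ j (τ i) a = (al x τ j i * ∏ l ∈ univ.erase i, br (τ i) (τ l)) * qv x j i a := by
  rw [Hf, Finset.sum_eq_single i]
  · ring
  · intro k _ hk
    rw [Finset.prod_eq_zero (i := i), mul_zero]
    · exact mem_erase.2 ⟨hk.symm, mem_univ _⟩
    · exact br_self _
  · simp

lemma Hf_top (x : ℕ × Ix nv → ℂ) (τ : ℕ → Fin 2 → ℂ) (j : Fin r) (a : Fin (nv j + 1)) :
    Hf x τ j (τ (nv j + 1)) a = ((∏ l : Fin (nv j + 1), br (τ (nv j + 1)) (τ l)) *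
      (AM x j).det) * qv x j (nv j + 1) a := by
  rw [mul_assoc, ← cf_sum, Finset.mul_sum, Hf]
  refine Finset.sum_congr rfl fun k _ => ?_
  rw [← Finset.mul_prod_erase univ _ (mem_univ k), al]
  ring

theorem exist (hn : n = ∑ j, nv j) (x : ℕ × Ix nv → ℂ) (τ : ℕ → Fin 2 → ℂ) (N : ℕ)
    (hN : ∀ j, nv j + 2 ≤ N) (hs : s ≤ N)
    (ha : ∀ i < N, x (i, none) ≠ 0)
    (hτ : ∀ i < N, ∀ k < N, i ≠ k → br (τ i) (τ k) ≠ 0)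
    (hdet : ∀ j, (AM x j).det ≠ 0) (hcf : ∀ j k, cf x j (nv j + 1) k ≠ 0)
    (hsep : sepD n (∏ j, pp x τ j) ≠ 0)
    (hpass : ∀ j, ∀ i < s, nv j + 1 < i → ∃ μ : ℂ, μ ≠ 0 ∧
      ∀ a, Hf x τ j (τ i) a = μ * qv x j i a) : Core nv n s x := by
  classical
  have hal : ∀ j k, al x τ j k ≠ 0 := by
    intro j k
    have := hN j
    exact mul_ne_zero (hcf _ _) (hτ _ (by omega) _ (by omega) (by omega))
  have hH : ∀ j i, (i < s ∨ i < nv j + 2) → ∃ μ : ℂ, μ ≠ 0 ∧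
      ∀ a, Hf x τ j (τ i) a = μ * qv x j i a := by
    intro j i hi
    have hNj := hN j
    by_cases h1 : nv j + 1 < i
    · exact hpass j i (by omega) h1
    · by_cases h2 : i = nv j + 1
      · subst h2
        refine ⟨_, ?_, Hf_top x τ j⟩
        refine mul_ne_zero (prod_ne_zero_iff.2 fun l _ => ?_) (hdet j)
        exact hτ _ (by omega) _ (by omega) (by omega)
      · refine ⟨_, ?_, Hf_lo x τ j ⟨i, by omega⟩⟩
        refine mul_ne_zero (hal _ _) (prod_ne_zero_iff.2 fun l hl => ?_)
        refine hτ _ (by simp; omega) _ (by omega) fun h => ?_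
        exact ne_of_mem_erase hl (Fin.ext h.symm)
  -- roots
  have hdeg : (∏ j, pp x τ j).natDegree ≤ n := by
    refine (Polynomial.natDegree_prod_le _ _).trans ?_
    rw [hn]
    exact Finset.sum_le_sum fun j _ => pp_deg x τ j
  obtain ⟨hdn, hsepP⟩ := sepD_ne hdeg hsep
  have hP0 : (∏ j, pp x τ j) ≠ 0 := hsepP.ne_zero
  have hp0 : ∀ j, pp x τ j ≠ 0 := fun j => prod_ne_zero_iff.1 hP0 j (mem_univ _)
  have hdj : ∀ j, (pp x τ j).natDegree = nv j := by
    rw [Polynomial.natDegree_prod _ _ (fun j _ => hp0 j), hn] at hdn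
    intro j
    exact (Finset.sum_eq_sum_iff_of_le (fun j _ => pp_deg x τ j)).1 hdn j (mem_univ _)
  have hroots : ∀ j, ∃ ρ : Fin (nv j) → ℂ, Function.Injective ρ ∧
      ∀ k, (pp x τ j).eval (ρ k) = 0 := by
    intro j
    have hsj : (pp x τ j).Separable := hsepP.of_dvd (Finset.dvd_prod_of_mem _ (mem_univ j))
    have hc : (pp x τ j).roots.toFinset.card = nv j := by
      rw [Multiset.toFinset_card_of_nodup (Polynomial.nodup_roots hsj), ← hdj j]
      exact (Polynomial.splits_iff_card_roots.1 (IsAlgClosed.splits _))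
    let g := (Finset.equivFinOfCardEq hc).symm
    refine ⟨fun k => (g k : ℂ), fun a b h => g.injective (Subtype.ext h), fun k => ?_⟩
    have := (g k).2
    rw [Multiset.mem_toFinset, Polynomial.mem_roots (hp0 j)] at this
    exact this
  choose ρ hρi hρ using hroots
  have hcross : ∀ j k i, i ≠ j → (pp x τ i).eval (ρ j k) ≠ 0 := by
    intro j k i hij h
    have h1 : pp x τ j * pp x τ i ∣ ∏ j, pp x τ j := by
      rw [← Finset.mul_prod_erase univ _ (mem_univ j)]
      exact mul_dvd_mul_left _ (Finset.dvd_prod_of_mem _ (mem_erase.2 ⟨hij, mem_univ _⟩))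
    obtain ⟨u, v, huv⟩ := (hsepP.of_dvd h1).isCoprime
    have := congrArg (Polynomial.eval (ρ j k)) huv
    simp [h, hρ] at this
  have hfρ : ∀ j k, Hf x τ j ![ρ j k, 1] 0 = 0 := fun j k => by rw [← pp_eval, hρ]
  have hfc : ∀ j k i, i ≠ j → Hf x τ i ![ρ j k, 1] 0 ≠ 0 := fun j k i hij => by
    rw [← pp_eval]; exact hcross j k i hij
  have hf0 : ∀ j, Hf x τ j (τ 0) 0 ≠ 0 := by
    intro j
    obtain ⟨μ, hμ, h⟩ := hH j 0 (by omega)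
    rw [h]
    have := hN j
    exact mul_ne_zero hμ (ha 0 (by omega))
  refine ⟨fun v o => o.elim (∏ j, Hf x τ j v 0)
    (fun q => Hf x τ q.1 v q.2.succ * ∏ i ∈ univ.erase q.1, Hf x τ i v 0), ?_, ?_, ?_, ?_⟩
  · rintro (_ | ⟨j, k⟩)
    · simp only [Option.elim_none]
      rw [hn]
      exact IsForm.prod univ nv fun j _ => isForm_Hf x τ j 0
    · simp only [Option.elim_some]
      rw [hn, ← Finset.add_sum_erase univ nv (mem_univ j)]
      exact (isForm_Hf x τ j _).mul (IsForm.prod _ nv fun j _ => isForm_Hf x τ j 0)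
  · intro ξ hξ
    simp only [Fintype.sum_option, Option.elim_none, Option.elim_some, Fintype.sum_sigma] at hξ
    have hξj : ∀ j k, ξ (some ⟨j, k⟩) = 0 := by
      intro j
      set g : (Fin 2 → ℂ) → ℂ := fun v => ∑ k : Fin (nv j), ξ (some ⟨j, k⟩) * Hf x τ j v k.succ
        with hg
      have hgF : IsForm (nv j) g := IsForm.sum _ fun k _ => (isForm_Hf x τ j _).cmul _
      have hgρ : ∀ k, g ![ρ j k, 1] = 0 := by
        intro k
        have h := hξ ![ρ j k, 1]
        rw [Finset.prod_eq_zero (mem_univ j) (hfρ j k), mul_zero, zero_add,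
          Finset.sum_eq_single j] at h
        · simp only [← mul_assoc] at h
          rw [← Finset.sum_mul] at h
          refine (mul_eq_zero.1 h).resolve_right ?_
          exact prod_ne_zero_iff.2 fun i hi => hfc j k i (ne_of_mem_erase hi)
        · intro j' _ hj'
          refine Finset.sum_eq_zero fun t _ => ?_
          rw [Finset.prod_eq_zero (mem_erase.2 ⟨hj'.symm, mem_univ j⟩) (hfρ j k)]
          ring
        · simp
      set y : ℂ := g (τ 0) / Hf x τ j (τ 0) 0 with hy
      have hF : IsForm (nv j) (fun v => g v - y * Hf x τ j v 0) :=
        hgF.sub ((isForm_Hf x τ j 0).cmul y)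
      have hne : ∀ k, br (τ 0) ![ρ j k, 1] ≠ 0 := by
        intro k h
        have hNj := hN j
        have h0 : τ 0 ≠ 0 := by
          intro h0
          apply hτ 0 (by omega) 1 (by omega) (by omega)
          simp [h0, br]
        obtain ⟨c, hc, hcv⟩ := br_zero_iff h0 (by
          intro h; have := congrFun h 1; simp at this) h
        apply hf0 j
        rw [hcv, (isForm_Hf x τ j 0).smul, hfρ, mul_zero]
      have hzero := hF.eq_zero (κ := Option (Fin (nv j))) (by simp)
        (fun o => o.elim (τ 0) (fun k => ![ρ j k, 1])) (by
          rintro (_ | k) (_ | l) hkl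
          · exact absurd rfl hkl
          · exact hne l
          · simp only [Option.elim_some, Option.elim_none]
            rw [br_swap]; exact neg_ne_zero.2 (hne k)
          · simp only [Option.elim_some, br]
            simp only [Matrix.cons_val_zero, Matrix.cons_val_one, mul_one, one_mul]
            rw [sub_ne_zero]
            intro h
            exact hkl (by rw [hρi j h])) (by
          rintro (_ | k)
          · simp only [Option.elim_none]
            rw [hy, div_mul_cancel₀ _ (hf0 j), sub_self]
          · simp only [Option.elim_some]
            rw [hgρ, hfρ]; simp)
      have hvm : Matrix.vecMul (Fin.cons (-y) (fun k => ξ (some ⟨j, k⟩)) : Fin (nv j + 1) → ℂ)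
          (AM x j) = 0 := by
        ext i
        obtain ⟨μ, hμ, h⟩ := hH j i (by omega)
        have h1 := hzero (τ i)
        simp only [hg, h] at h1
        simp only [Matrix.vecMul, dotProduct, AM, Pi.zero_apply, Fin.sum_univ_succ, Fin.cons_zero,
          Fin.cons_succ]
        apply mul_left_cancel₀ hμ
        rw [mul_zero, ← h1, mul_add, Finset.mul_sum, add_comm, sub_eq_add_neg]
        congr 1
        · exact Finset.sum_congr rfl fun k _ => by ring
        · ring
      have h2 := Matrix.eq_zero_of_vecMul_eq_zero (hdet j) hvm
      intro k
      have := congrFun h2 k.succ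
      simpa using this
    have h := hξ (τ 0)
    simp only [hξj, zero_mul, Finset.sum_const_zero, add_zero] at h
    have hn0 := (mul_eq_zero.1 h).resolve_right (prod_ne_zero_iff.2 fun j _ => hf0 j)
    ext o
    rcases o with _ | ⟨j, k⟩
    · exact hn0
    · exact hξj j k
  · intro i hi
    choose μ hμ0 hμ using fun j => hH j i (Or.inl hi)
    have hai := ha i (by omega)
    have hprod : ∏ j, (μ j * x (i, none)) ≠ 0 :=
      prod_ne_zero_iff.2 fun j _ => mul_ne_zero (hμ0 j) hai
    by_cases hτ0 : τ i = 0
    · by_cases hr : Nonempty (Fin r)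
      · obtain ⟨j⟩ := hr
        have hNj := hN j
        exfalso
        by_cases h0 : i = 0
        · apply hτ i (by omega) 1 (by omega) (by omega)
          simp [hτ0, br]
        · apply hτ i (by omega) 0 (by omega) (by omega)
          simp [hτ0, br]
      · refine ⟨![1, 0], by intro h; have := congrFun h 0; simp at this, x (i, none), hai, ?_⟩
        rintro (_ | ⟨j, k⟩)
        · simp only [Option.elim_none]
          rw [Finset.prod_eq_one, mul_one]
          intro j; exact absurd ⟨j⟩ hr
        · exact absurd ⟨j⟩ hr
    refine ⟨τ i, hτ0, x (i, none) / ∏ j, (μ j * x (i, none)), div_ne_zero hai hprod, ?_⟩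
    have hf : ∀ j, Hf x τ j (τ i) 0 = μ j * x (i, none) := fun j => hμ j 0
    intro o
    rw [div_mul_eq_mul_div, eq_div_iff hprod]
    rcases o with _ | ⟨j, k⟩
    · simp only [Option.elim_none, hf]
    · simp only [Option.elim_some, hf]
      have h1 : Hf x τ j (τ i) k.succ = μ j * x (i, some ⟨j, k⟩) := hμ j k.succ
      rw [h1, ← Finset.mul_prod_erase univ _ (mem_univ j)]
      ring
  · intro j
    refine ⟨fun k => ![ρ j k, 1], ?_, ?_, ?_⟩
    · intro k h; have := congrFun h 1; simp at this
    · intro k l hkl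
      simp only [br, Matrix.cons_val_zero, Matrix.cons_val_one, mul_one, one_mul]
      rw [sub_ne_zero]
      intro h
      exact hkl (hρi j h)
    · rintro k (_ | ⟨j', t⟩) ho
      · simp only [Option.elim_none]
        exact Finset.prod_eq_zero (mem_univ j) (hfρ j k)
      · simp only [Option.elim_some]
        rw [Finset.prod_eq_zero (mem_erase.2 ⟨?_, mem_univ j⟩) (hfρ j k), mul_zero]
        rintro rfl
        exact ho t rfl

end
end

noncomputable section
open Finset

lemma br_aff (a b : ℂ) : br ![a, 1] ![b, 1] = a - b := by simp [br]

section
variable {r : ℕ} {nv : Fin r → ℕ} {n s : ℕ}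

/-- example roots -/
def rS (nv : Fin r → ℕ) (q : (j : Fin r) × Fin (nv j)) : ℂ :=
  -(((Fintype.equivFin _ q : ℕ) : ℂ) + 1)

lemma rS_inj : Function.Injective (rS nv) := by
  intro a b h
  simp only [rS, neg_inj, add_left_inj, Nat.cast_inj] at h
  exact (Fintype.equivFin _).injective (Fin.ext h)

lemma rS_ne (i : ℕ) (q : (j : Fin r) × Fin (nv j)) : (i : ℂ) - rS nv q ≠ 0 := by
  simp only [rS, sub_neg_eq_add]
  exact_mod_cast (by omega : i + ((Fintype.equivFin _ q : ℕ) + 1) ≠ 0)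

/-- the example configuration -/
def xS (nv : Fin r → ℕ) : ℕ × Ix nv → ℂ :=
  fun q => q.2.elim 1 (fun o => ((q.1 : ℂ) - rS nv o)⁻¹)

/-- forms parametrizing the example -/
def Fo (nv : Fin r → ℕ) (j : Fin r) (a : Fin (nv j + 1)) (v : Fin 2 → ℂ) : ℂ :=
  (Fin.cases (∏ k : Fin (nv j), br v ![rS nv ⟨j, k⟩, 1])
    (fun t => br v ![-1, 0] * ∏ k ∈ univ.erase t, br v ![rS nv ⟨j, k⟩, 1]) a : ℂ)

lemma Fo_form (j : Fin r) (a : Fin (nv j + 1)) : IsForm (nv j) (Fo nv j a) := by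
  refine Fin.cases ?_ (fun t => ?_) a
  · have := isForm_prod_br (univ : Finset (Fin (nv j))) (fun k => ![rS nv ⟨j, k⟩, 1])
    rw [Finset.card_univ, Fintype.card_fin] at this
    exact this
  · have := (isForm_br ![-1, 0]).mul
      (isForm_prod_br (univ.erase t : Finset (Fin (nv j))) (fun k => ![rS nv ⟨j, k⟩, 1]))
    have h : 1 + (univ.erase t : Finset (Fin (nv j))).card = nv j := by
      have := t.2
      simp; omega
    rw [h] at this
    exact this

lemma Fo_eval (j : Fin r) (a : Fin (nv j + 1)) (i : ℕ) :
    Fo nv j a ![(i : ℂ), 1] = (∏ k : Fin (nv j), ((i : ℂ) - rS nv ⟨j, k⟩)) * qv (xS nv) j i a := by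
  refine Fin.cases ?_ (fun t => ?_) a
  · simp [Fo, br_aff, qv, xS]
  · simp only [Fo, Fin.cases_succ, br_aff, qv, Fin.cons_succ, xS, Option.elim_some]
    rw [← Finset.mul_prod_erase univ _ (mem_univ t)]
    have := rS_ne i (⟨j, t⟩ : (j : Fin r) × Fin (nv j))
    simp only [br]
    simp
    field_simp

lemma tS_ne {m : ℕ} (i j : Fin m) (h : i ≠ j) : br ![((i : ℕ) : ℂ), 1] ![((j : ℕ) : ℂ), 1] ≠ 0 := by
  rw [br_aff, sub_ne_zero]
  intro h'
  exact h (Fin.ext (by exact_mod_cast h'))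

lemma det_xS (j : Fin r) : (AM (xS nv) j).det ≠ 0 := by
  intro h0
  obtain ⟨ξ, hξ, hξ'⟩ := Matrix.exists_vecMul_eq_zero_iff.2 h0
  apply hξ
  have hF : IsForm (nv j) (fun v => ∑ a, ξ a * Fo nv j a v) :=
    IsForm.sum _ fun a _ => (Fo_form j a).cmul _
  have hz := hF.eq_zero (κ := Fin (nv j + 1)) (by simp) (fun i => ![((i : ℕ) : ℂ), 1])
    (fun i k h => tS_ne i k h) (fun i => by
      have := congrFun hξ' i
      simp only [Matrix.vecMul, dotProduct, AM, Pi.zero_apply] at this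
      simp only [Fo_eval]
      have h2 : ∀ a, ξ a * ((∏ k : Fin (nv j), (((i : ℕ) : ℂ) - rS nv ⟨j, k⟩)) *
        qv (xS nv) j i a) = (∏ k : Fin (nv j), (((i : ℕ) : ℂ) - rS nv ⟨j, k⟩)) *
          (ξ a * qv (xS nv) j i a) := fun a => by ring
      simp only [h2]
      rw [← Finset.mul_sum, this, mul_zero])
  have hs : ∀ t : Fin (nv j), ξ t.succ = 0 := by
    intro t
    have := hz ![rS nv ⟨j, t⟩, 1]
    rw [Finset.sum_eq_single t.succ] at this
    · refine (mul_eq_zero.1 this).resolve_right ?_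
      simp only [Fo, Fin.cases_succ, br_aff]
      refine mul_ne_zero (by simp [br]) (prod_ne_zero_iff.2 fun k hk => ?_)
      rw [sub_ne_zero]
      intro h
      have := rS_inj h
      simp only [Sigma.mk.injEq, heq_eq_eq, true_and] at this
      exact ne_of_mem_erase hk this.symm
    · intro a _ ha
      refine mul_eq_zero_of_right _ ?_
      revert ha
      refine Fin.cases (fun _ => ?_) (fun k hk => ?_) a
      · simp only [Fo, Fin.cases_zero, br_aff]
        exact Finset.prod_eq_zero (mem_univ t) (sub_self _)
      · simp only [Fo, Fin.cases_succ, br_aff]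
        rw [Finset.prod_eq_zero (mem_erase.2 ⟨?_, mem_univ t⟩) (sub_self _), mul_zero]
        rintro rfl; exact hk rfl
    · simp
  have h1 := hz ![((0 : ℕ) : ℂ), 1]
  rw [Fin.sum_univ_succ] at h1
  simp only [hs, zero_mul, Finset.sum_const_zero, add_zero, Fo_eval] at h1
  have h2 : ξ 0 = 0 := by
    refine (mul_eq_zero.1 h1).resolve_right (mul_ne_zero ?_ ?_)
    · exact prod_ne_zero_iff.2 fun k _ => rS_ne 0 _
    · simp [qv, xS]
  ext a
  refine Fin.cases h2 (fun t => hs t) a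

lemma cf_xS (j : Fin r) : ∃ φ : Fin (nv j + 1) → ℂ, (∀ k, φ k ≠ 0) ∧
    (∀ i, nv j < i → ∃ u : ℂ, u ≠ 0 ∧ ∀ k : Fin (nv j + 1), cf (xS nv) j i k =
      u * φ k / ((i : ℂ) - ((k : ℕ) : ℂ))) ∧
    ∀ T : ℂ, ∑ k, φ k * ∏ l ∈ univ.erase k, (T - ((l : ℕ) : ℂ)) =
      ∏ k : Fin (nv j), (T - rS nv ⟨j, k⟩) := by
  have hf : ∀ i : ℕ, ∏ k : Fin (nv j), ((i : ℂ) - rS nv ⟨j, k⟩) ≠ 0 := fun i =>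
    prod_ne_zero_iff.2 fun k _ => rS_ne i _
  have hD : ∀ k : Fin (nv j + 1), ∏ l ∈ univ.erase k, (((k : ℕ) : ℂ) - ((l : ℕ) : ℂ)) ≠ 0 := by
    intro k
    refine prod_ne_zero_iff.2 fun l hl => ?_
    rw [← br_aff]
    exact tS_ne _ _ (ne_of_mem_erase hl).symm
  have hL : ∀ a (T : ℂ), Fo nv j a ![T, 1] = ∑ k : Fin (nv j + 1),
      ((∏ t : Fin (nv j), (((k : ℕ) : ℂ) - rS nv ⟨j, t⟩)) * qv (xS nv) j k a) /
      (∏ l ∈ univ.erase k, (((k : ℕ) : ℂ) - ((l : ℕ) : ℂ))) *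
      ∏ l ∈ univ.erase k, (T - ((l : ℕ) : ℂ)) := by
    intro a T
    rw [(Fo_form j a).lagrange (κ := Fin (nv j + 1)) (by simp) (fun i => ![((i : ℕ) : ℂ), 1])
      (fun i k h => tS_ne i k h)]
    simp only [Fo_eval, br_aff]
  refine ⟨fun k => (∏ t : Fin (nv j), (((k : ℕ) : ℂ) - rS nv ⟨j, t⟩)) /
    ∏ l ∈ univ.erase k, (((k : ℕ) : ℂ) - ((l : ℕ) : ℂ)), fun k => div_ne_zero (hf k) (hD k), ?_, ?_⟩
  · intro i hi
    have hik : ∀ k : Fin (nv j + 1), (i : ℂ) - ((k : ℕ) : ℂ) ≠ 0 := by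
      intro k
      rw [sub_ne_zero]
      exact_mod_cast (by omega : i ≠ (k : ℕ))
    refine ⟨(AM (xS nv) j).det * (∏ l : Fin (nv j + 1), ((i : ℂ) - ((l : ℕ) : ℂ))) /
      ∏ k : Fin (nv j), ((i : ℂ) - rS nv ⟨j, k⟩),
      div_ne_zero (mul_ne_zero (det_xS j) (prod_ne_zero_iff.2 fun l _ => hik l)) (hf i),
      fun k => ?_⟩
    rw [cf_unique (xS nv) j i (det_xS j) (fun k =>
      (∏ t : Fin (nv j), (((k : ℕ) : ℂ) - rS nv ⟨j, t⟩)) /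
      (∏ l ∈ univ.erase k, (((k : ℕ) : ℂ) - ((l : ℕ) : ℂ))) *
      (∏ l ∈ univ.erase k, ((i : ℂ) - ((l : ℕ) : ℂ))) /
        ∏ k : Fin (nv j), ((i : ℂ) - rS nv ⟨j, k⟩))]
    · rw [← Finset.mul_prod_erase univ _ (mem_univ k)]
      have h1 := hik k
      have h2 := hf i
      have h3 := hD k
      generalize ∏ k : Fin (nv j), ((i : ℂ) - rS nv ⟨j, k⟩) = Z1 at *
      field_simp
    · intro a
      apply mul_left_cancel₀ (hf i)
      rw [← Fo_eval, hL, Finset.mul_sum]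
      refine Finset.sum_congr rfl fun k _ => ?_
      have h2 := hf i
      generalize ∏ k : Fin (nv j), ((i : ℂ) - rS nv ⟨j, k⟩) = Z1 at *
      field_simp
  · intro T
    have := hL 0 T
    simp only [Fo, Fin.cases_zero, br_aff] at this
    rw [this]
    refine Finset.sum_congr rfl fun k _ => ?_
    simp [qv, xS]

lemma pp_xS (τ : ℕ → Fin 2 → ℂ) (γ : ℕ → ℂ) (j : Fin r)
    (hγ : ∀ i < nv j + 2, γ i ≠ 0) (hτ : ∀ i < nv j + 2, τ i = γ i • ![(i : ℂ), 1]) :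
    ∃ c : ℂ, c ≠ 0 ∧ pp (xS nv) τ j = Polynomial.C c *
      ∏ k : Fin (nv j), (Polynomial.X - Polynomial.C (rS nv ⟨j, k⟩)) := by
  obtain ⟨φ, hφ, hu, hT⟩ := cf_xS (nv := nv) j
  obtain ⟨u, hu0, hu⟩ := hu (nv j + 1) (by omega)
  refine ⟨u * γ (nv j + 1) * ∏ l : Fin (nv j + 1), γ l, mul_ne_zero (mul_ne_zero hu0
    (hγ _ (by omega))) (prod_ne_zero_iff.2 fun l _ => hγ _ (by omega)), ?_⟩
  refine Polynomial.funext fun T => ?_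
  rw [pp_eval]
  simp only [Polynomial.eval_mul, Polynomial.eval_C, Polynomial.eval_prod, Polynomial.eval_sub,
    Polynomial.eval_X]
  rw [← hT, Finset.mul_sum, Hf]
  refine Finset.sum_congr rfl fun k _ => ?_
  have h1 : br (τ (nv j + 1)) (τ k) = γ (nv j + 1) * γ k * (((nv j + 1 : ℕ) : ℂ) - ((k : ℕ) : ℂ)) := by
    rw [hτ _ (by omega), hτ k (by omega)]
    simp [br]; ring
  have h2 : ∀ l : Fin (nv j + 1), br ![T, 1] (τ l) = γ l * (T - ((l : ℕ) : ℂ)) := by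
    intro l
    rw [hτ l (by omega)]
    simp [br]; ring
  have h3 : (((nv j + 1 : ℕ) : ℂ) - ((k : ℕ) : ℂ)) ≠ 0 := by
    rw [sub_ne_zero]
    exact_mod_cast (by omega : nv j + 1 ≠ (k : ℕ))
  simp only [al, h1, h2, hu, Finset.prod_mul_distrib]
  rw [← Finset.mul_prod_erase univ _ (mem_univ k)]
  have h4 : qv (xS nv) j k 0 = 1 := by simp [qv, xS]
  rw [h4]
  field_simp

lemma sep_xS (hn : n = ∑ j, nv j) (τ : ℕ → Fin 2 → ℂ) (γ : ℕ → ℂ) (N : ℕ) (hN : ∀ j, nv j + 2 ≤ N)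
    (hγ : ∀ i < N, γ i ≠ 0) (hτ : ∀ i < N, τ i = γ i • ![(i : ℂ), 1]) :
    sepD n (∏ j, pp (xS nv) τ j) ≠ 0 := by
  choose c hc hp using fun j => pp_xS (nv := nv) τ γ j (fun i hi => hγ i (by have := hN j; omega))
    (fun i hi => hτ i (by have := hN j; omega))
  have h1 : ∏ j, pp (xS nv) τ j = Polynomial.C (∏ j, c j) *
      ∏ q : (j : Fin r) × Fin (nv j), (Polynomial.X - Polynomial.C (rS nv q)) := by
    simp only [hp, Finset.prod_mul_distrib, map_prod, Fintype.prod_sigma]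
  have hc0 : ∏ j, c j ≠ 0 := prod_ne_zero_iff.2 fun j _ => hc j
  have hm : (∏ q : (j : Fin r) × Fin (nv j), (Polynomial.X - Polynomial.C (rS nv q))).Monic :=
    Polynomial.monic_prod_of_monic _ _ fun q _ => Polynomial.monic_X_sub_C _
  rw [h1]
  apply sepD_ne_of
  · rw [Polynomial.natDegree_C_mul hc0, Polynomial.natDegree_prod_of_monic _ _
      (fun q _ => Polynomial.monic_X_sub_C _)]
    simp [hn]
  · exact mul_ne_zero (Polynomial.C_ne_zero.2 hc0) hm.ne_zero
  · refine Polynomial.Separable.unit_mul (Polynomial.isUnit_C.2 (Ne.isUnit hc0)) ?_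
    exact Polynomial.separable_prod_X_sub_C_iff.2 rS_inj

theorem gen_exist (hn : n = ∑ j, nv j) (hn1 : 1 ≤ n) (e : Fin (n + 1) ≃ Ix nv) (N : ℕ)
    (hN : ∀ j, nv j + 2 ≤ N) (hs : s ≤ N)
    (τ : (ℕ × Ix nv → ℂ) → ℕ → Fin 2 → ℂ) (hτ : ∀ i b, IsPF (fun x => τ x i b))
    (γ : ℕ → ℂ) (hγ : ∀ i < N, γ i ≠ 0) (hτS : ∀ i < N, τ (xS nv) i = γ i • ![(i : ℂ), 1])
    (hpass : ∀ x, (∀ i < N, x (i, none) ≠ 0) →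
      (∀ i < N, ∀ k < N, i ≠ k → br (τ x i) (τ x k) ≠ 0) →
      (∀ j, (AM x j).det ≠ 0) → (∀ j k, cf x j (nv j + 1) k ≠ 0) →
      ∀ j, ∀ i < s, nv j + 1 < i → ∃ μ : ℂ, μ ≠ 0 ∧
      ∀ a, Hf x (τ x) j (τ x i) a = μ * qv x j i a) :
    GenHoldsPtsSpaces n s r nv fun P B =>
      ∃ C : Set (PP n), IsRNC n C ∧ (∀ i, projSet (P i) ⊆ C) ∧
        ∀ j, (C ∩ projSet (B j)).ncard = nv j := by
  classical
  have hbr : ∀ i k, IsPF (fun x => br (τ x i) (τ x k)) := fun i k =>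
    ((hτ _ _).mul (hτ _ _)).sub ((hτ _ _).mul (hτ _ _))
  refine gen_of_core hn1 e (fun x => ((∏ i ∈ range N, x (i, none)) *
    ∏ i ∈ range N, ∏ k ∈ (range N).erase i, br (τ x i) (τ x k)) *
    (((∏ j, (AM x j).det) * ∏ j, ∏ k, cf x j (nv j + 1) k) * sepD n (∏ j, pp x (τ x) j))) ?_ ?_ ?_
  · refine ((IsPF.prod _ fun i => IsPF.coord _).mul
      (IsPF.prod _ fun i => IsPF.prod _ fun k => hbr _ _)).mul
      (((IsPF.prod _ fun j => IsPF.det (IsPF.AM j)).mul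
        (IsPF.prod _ fun j => IsPF.prod _ fun k => IsPF.cf _ _ _)).mul ?_)
    refine IsPFP.sepD (IsPFP.prod _ fun j => ?_) n
    refine IsPFP.sum _ fun k => IsPFP.mul (IsPFP.C ?_) (IsPFP.prod _ fun l => ?_)
    · exact ((IsPF.cf _ _ _).mul (hbr _ _)).mul (IsPF.coord _)
    · exact ((IsPFP.C (hτ _ _)).mul (IsPFP.const _)).sub (IsPFP.C (hτ _ _))
  · refine ⟨xS nv, mul_ne_zero (mul_ne_zero ?_ ?_) (mul_ne_zero (mul_ne_zero ?_ ?_) ?_)⟩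
    · exact prod_ne_zero_iff.2 fun i _ => by simp [xS]
    · refine prod_ne_zero_iff.2 fun i hi => prod_ne_zero_iff.2 fun k hk => ?_
      have hk1 := ne_of_mem_erase hk
      have hk2 := mem_of_mem_erase hk
      rw [mem_range] at hi hk2
      rw [hτS i hi, hτS k hk2]
      have : br (γ i • ![(i : ℂ), 1]) (γ k • ![(k : ℂ), 1]) = γ i * γ k * ((i : ℂ) - k) := by
        simp [br]; ring
      rw [this]
      refine mul_ne_zero (mul_ne_zero (hγ i hi) (hγ k hk2)) ?_
      rw [sub_ne_zero]
      exact_mod_cast hk1.symm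
    · exact prod_ne_zero_iff.2 fun j _ => det_xS j
    · refine prod_ne_zero_iff.2 fun j _ => prod_ne_zero_iff.2 fun k _ => ?_
      obtain ⟨φ, hφ, hu, -⟩ := cf_xS (nv := nv) j
      obtain ⟨u, hu0, hu⟩ := hu (nv j + 1) (by omega)
      rw [hu]
      refine div_ne_zero (mul_ne_zero hu0 (hφ k)) ?_
      rw [sub_ne_zero]
      exact_mod_cast (by omega : nv j + 1 ≠ (k : ℕ))
    · exact sep_xS hn _ γ N hN hγ hτS
  · intro x hx
    have h1 := left_ne_zero_of_mul hx
    have h2 := right_ne_zero_of_mul hx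
    have ha : ∀ i < N, x (i, none) ≠ 0 := fun i hi =>
      prod_ne_zero_iff.1 (left_ne_zero_of_mul h1) i (mem_range.2 hi)
    have hb : ∀ i < N, ∀ k < N, i ≠ k → br (τ x i) (τ x k) ≠ 0 := fun i hi k hk hik =>
      prod_ne_zero_iff.1 (prod_ne_zero_iff.1 (right_ne_zero_of_mul h1) i (mem_range.2 hi)) k
        (mem_erase.2 ⟨hik.symm, mem_range.2 hk⟩)
    have hd : ∀ j, (AM x j).det ≠ 0 := fun j =>
      prod_ne_zero_iff.1 (left_ne_zero_of_mul (left_ne_zero_of_mul h2)) j (mem_univ _)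
    have hc : ∀ j k, cf x j (nv j + 1) k ≠ 0 := fun j k =>
      prod_ne_zero_iff.1 (prod_ne_zero_iff.1 (right_ne_zero_of_mul (left_ne_zero_of_mul h2)) j
        (mem_univ _)) k (mem_univ _)
    exact exist hn x (τ x) N hN hs ha hb hd hc (right_ne_zero_of_mul h2)
      (hpass x ha hb hd hc)

end
end

noncomputable section
open Finset

lemma line_case (m : ℕ) (hm : m = 1) (q : ℕ → Fin (m + 1) → ℂ) (ρ : ℂ) (t : ℕ → Fin 2 → ℂ)
    (ht : ∀ i, t i = ![q i ⟨0, by omega⟩ + ρ * q i ⟨1, by omega⟩, q i ⟨1, by omega⟩])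
    (A : Matrix (Fin (m + 1)) (Fin (m + 1)) ℂ) (hA : A = fun (a : Fin (m + 1)) (k : Fin (m + 1)) => q (k : ℕ) a) (i : ℕ)
    (a : Fin (m + 1)) :
    ∑ k : Fin (m + 1), (A.cramer (q (m + 1)) k * br (t (m + 1)) (t k)) * q k a *
      ∏ l ∈ univ.erase k, br (t i) (t l) =
      (br (t 2) (t 1) * br (t 2) (t 0) * br (t 0) (t 1)) * q i a := by
  subst hm
  have e0 : (univ.erase (0 : Fin 2)) = {1} := by decide
  have e1 : (univ.erase (1 : Fin 2)) = {0} := by decide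
  have c0 : ∀ b, A.cramer b 0 = b 0 * A 1 1 - A 0 1 * b 1 := by
    intro b
    rw [Matrix.cramer_apply, Matrix.det_fin_two]
    simp
  have c1 : ∀ b, A.cramer b 1 = A 0 0 * b 1 - b 0 * A 1 0 := by
    intro b
    rw [Matrix.cramer_apply, Matrix.det_fin_two]
    simp
  rw [Fin.sum_univ_two, e0, e1, c0, c1, hA]
  simp only [Finset.prod_singleton, ht, br]
  simp
  fin_cases a <;> simp <;> ring

section
variable {r : ℕ} {nv : Fin r → ℕ} {n s : ℕ}

lemma nv_le (hn : n = ∑ j, nv j) (j : Fin r) : nv j ≤ n := by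
  rw [hn]; exact Finset.single_le_sum (f := nv) (fun _ _ => Nat.zero_le _) (mem_univ j)

lemma ex_II (hn : n = ∑ j, nv j) (hn1 : 1 ≤ n) (e : Fin (n + 1) ≃ Ix nv)
    (hs : ∀ j, s ≤ nv j + 2) :
    GenHoldsPtsSpaces n s r nv fun P B =>
      ∃ C : Set (PP n), IsRNC n C ∧ (∀ i, projSet (P i) ⊆ C) ∧
        ∀ j, (C ∩ projSet (B j)).ncard = nv j := by
  refine gen_exist hn hn1 e (n + s + 3) (fun j => by have := nv_le hn j; omega) (by omega)
    (fun _ i => ![(i : ℂ), 1]) (fun i b => IsPF.const _) (fun _ => 1) (fun _ _ => one_ne_zero)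
    (fun i _ => by simp) ?_
  intro x _ _ _ _ j i hi hji
  have := hs j
  omega

lemma ex_I (hn : n = ∑ j, nv j) (hn1 : 1 ≤ n) (e : Fin (n + 1) ≃ Ix nv)
    (j0 : Fin r) (h1 : nv j0 = 1) (hs : ∀ j, j ≠ j0 → s ≤ nv j + 2) :
    GenHoldsPtsSpaces n s r nv fun P B =>
      ∃ C : Set (PP n), IsRNC n C ∧ (∀ i, projSet (P i) ⊆ C) ∧
        ∀ j, (C ∩ projSet (B j)).ncard = nv j := by
  set o : (j : Fin r) × Fin (nv j) := ⟨j0, ⟨0, by omega⟩⟩ with ho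
  refine gen_exist hn hn1 e (n + s + 3) (fun j => by have := nv_le hn j; omega) (by omega)
    (fun x i => ![x (i, none) + rS nv o * x (i, some o), x (i, some o)]) ?_
    (fun i => ((i : ℂ) - rS nv o)⁻¹) (fun i _ => inv_ne_zero (rS_ne _ _)) ?_ ?_
  · intro i b
    fin_cases b
    · exact (IsPF.coord _).add ((IsPF.const _).mul (IsPF.coord _))
    · exact IsPF.coord _
  · intro i _
    have := rS_ne i o
    ext b
    fin_cases b
    · simp [xS]; field_simp; ring
    · simp [xS]
  · intro x _ hb _ _ j i hi hji
    by_cases hj : j = j0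
    · subst hj
      refine ⟨_, ?_, fun a => line_case (nv j) h1 (qv x j) (rS nv o) _ (fun i => rfl) (AM x j) rfl i a⟩
      exact mul_ne_zero (mul_ne_zero (hb 2 (by omega) 1 (by omega) (by omega))
        (hb 2 (by omega) 0 (by omega) (by omega))) (hb 0 (by omega) 1 (by omega) (by omega))
    · have := hs j hj
      omega

lemma ex_III (hn : n = ∑ j, nv j) (hn1 : 1 ≤ n) (e : Fin (n + 1) ≃ Ix nv)
    (j0 : Fin r) (hs0 : s ≤ nv j0 + 3) (hs : ∀ j, j ≠ j0 → s ≤ nv j + 2) :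
    GenHoldsPtsSpaces n s r nv fun P B =>
      ∃ C : Set (PP n), IsRNC n C ∧ (∀ i, projSet (P i) ⊆ C) ∧
        ∀ j, (C ∩ projSet (B j)).ncard = nv j := by
  obtain ⟨φ, hφ, hu, -⟩ := cf_xS (nv := nv) j0
  obtain ⟨w, hw0, hw⟩ := hu (nv j0 + 2) (by omega)
  obtain ⟨u, hu0, hu⟩ := hu (nv j0 + 1) (by omega)
  have hp : ∀ k : Fin (nv j0 + 1), ((nv j0 + 1 : ℕ) : ℂ) - ((k : ℕ) : ℂ) ≠ 0 := by
    intro k; rw [sub_ne_zero]; exact_mod_cast (by omega : nv j0 + 1 ≠ (k : ℕ))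
  have hq : ∀ k : Fin (nv j0 + 1), ((nv j0 + 2 : ℕ) : ℂ) - ((k : ℕ) : ℂ) ≠ 0 := by
    intro k; rw [sub_ne_zero]; exact_mod_cast (by omega : nv j0 + 2 ≠ (k : ℕ))
  have hpq : ((nv j0 + 1 : ℕ) : ℂ) - ((nv j0 + 2 : ℕ) : ℂ) ≠ 0 := by
    rw [sub_ne_zero]; exact_mod_cast (by omega : nv j0 + 1 ≠ nv j0 + 2)
  set p : ℂ := ((nv j0 + 1 : ℕ) : ℂ) with hpd
  set q : ℂ := ((nv j0 + 2 : ℕ) : ℂ) with hqd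
  refine gen_exist hn hn1 e (n + s + 3) (fun j => by have := nv_le hn j; omega) (by omega)
    (fun x i => if h : i < nv j0 + 1 then
      ![q * (w⁻¹ * cf x j0 (nv j0 + 2) ⟨i, h⟩) - p * (u⁻¹ * cf x j0 (nv j0 + 1) ⟨i, h⟩),
        w⁻¹ * cf x j0 (nv j0 + 2) ⟨i, h⟩ - u⁻¹ * cf x j0 (nv j0 + 1) ⟨i, h⟩]
      else ![(i : ℂ), 1]) ?_
    (fun i => if h : i < nv j0 + 1 then φ ⟨i, h⟩ * (p - q) / ((p - i) * (q - i)) else 1) ?_ ?_ ?_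
  · intro i b
    by_cases h : i < nv j0 + 1
    · simp only [h, dite_true]
      fin_cases b
      · exact ((IsPF.const _).mul ((IsPF.const _).mul (IsPF.cf _ _ _))).sub
          ((IsPF.const _).mul ((IsPF.const _).mul (IsPF.cf _ _ _)))
      · exact ((IsPF.const _).mul (IsPF.cf _ _ _)).sub ((IsPF.const _).mul (IsPF.cf _ _ _))
    · simp only [h, dite_false]
      exact IsPF.const _
  · intro i _
    by_cases h : i < nv j0 + 1
    · simp only [h, dite_true]
      exact div_ne_zero (mul_ne_zero (hφ _) hpq) (mul_ne_zero (hp ⟨i, h⟩) (hq ⟨i, h⟩))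
    · simp [h]
  · intro i _
    by_cases h : i < nv j0 + 1
    · simp only [h, dite_true]
      have h1 := hp ⟨i, h⟩
      have h2 := hq ⟨i, h⟩
      simp only at h1 h2
      rw [hw, hu]
      simp only
      ext b
      fin_cases b
      · simp only [Fin.zero_eta, Matrix.cons_val_zero, Pi.smul_apply, smul_eq_mul]
        field_simp
        ring
      · simp only [Fin.mk_one, Matrix.cons_val_one, Pi.smul_apply, smul_eq_mul,
          Matrix.cons_val_fin_one]
        field_simp
        ring
    · simp [h]
  · intro x _ hb hd hc j i hi hji
    by_cases hj : j = j0
    · subst hj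
      obtain rfl : i = nv j + 2 := by omega
      refine ⟨(w⁻¹ * u) * (∏ l : Fin (nv j + 1), ((p - q) * u⁻¹ * cf x j (nv j + 1) l)) *
        (AM x j).det, mul_ne_zero (mul_ne_zero (mul_ne_zero (inv_ne_zero hw0) hu0)
          (prod_ne_zero_iff.2 fun l _ => mul_ne_zero (mul_ne_zero hpq (inv_ne_zero hu0)) (hc j l)))
          (hd j), fun a => ?_⟩
      have hk : ∀ k : Fin (nv j + 1), (k : ℕ) < nv j + 1 := fun k => k.2
      have n1 : ¬ (nv j + 1 < nv j + 1) := by omega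
      have n2 : ¬ (nv j + 2 < nv j + 1) := by omega
      rw [mul_assoc, ← cf_sum, Finset.mul_sum, Hf]
      refine Finset.sum_congr rfl fun k _ => ?_
      rw [← Finset.mul_prod_erase univ _ (mem_univ k)]
      simp only [al, hk, n1, n2, dite_true, dite_false, Fin.eta]
      have b1 : ∀ c d : ℂ, br ![p, 1] ![q * d - p * c, d - c] = (p - q) * d := by
        intro c d; simp [br]; ring
      have b2 : ∀ c d : ℂ, br ![q, 1] ![q * d - p * c, d - c] = (p - q) * c := by
        intro c d; simp [br]; ring
      rw [← hpd, ← hqd, b1]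
      simp only [b2]
      simp only [← mul_assoc]
      generalize (∏ l ∈ univ.erase k, _ : ℂ) = Z
      field_simp
    · have := hs j hj
      omega
end

end


/-- Theorem (SEGREteoiff): for a generic configuration of `s` points and `r` linear
subspaces `Λ₁,…,Λ_r` of dimensions `n₁-1,…,n_r-1` in `ℙⁿ`, `n = n₁+⋯+n_r`, there exists
a rational normal curve through the points meeting each `Λⱼ` in exactly `nⱼ` distinct
points if and only if either (`s ≤ n₁+3` and `1 < n₁ < n₂`) or (`s ≤ n₂+2` and
(`n₁ = 1` or `n₁ = n₂`)). -/
theorem segre_feasibility_iff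
    (r : ℕ) (hr : 2 ≤ r) (nv : Fin r → ℕ) (hnv : ∀ j, 1 ≤ nv j) (hmono : Monotone nv)
    (n : ℕ) (hn : n = ∑ j, nv j) (s : ℕ) :
    (GenHoldsPtsSpaces n s r nv fun P B =>
      ∃ C : Set (PP n), IsRNC n C ∧ (∀ i, projSet (P i) ⊆ C) ∧
        ∀ j, (C ∩ projSet (B j)).ncard = nv j) ↔
    ((s ≤ nv ⟨0, by omega⟩ + 3 ∧ 1 < nv ⟨0, by omega⟩ ∧ nv ⟨0, by omega⟩ < nv ⟨1, by omega⟩) ∨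
     (s ≤ nv ⟨1, by omega⟩ + 2 ∧ (nv ⟨0, by omega⟩ = 1 ∨ nv ⟨0, by omega⟩ = nv ⟨1, by omega⟩))) := by
  have hj : (⟨0, by omega⟩ : Fin r) ≠ ⟨1, by omega⟩ := by simp
  have h01 : nv ⟨0, by omega⟩ ≤ nv ⟨1, by omega⟩ := hmono (by simp [Fin.le_def])
  have hne : ∀ j, j ≠ (⟨0, by omega⟩ : Fin r) → nv ⟨1, by omega⟩ ≤ nv j := by
    intro j h
    refine hmono ?_
    rw [Fin.le_def]
    have : (j : ℕ) ≠ 0 := fun h' => h (Fin.ext h')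
    show 1 ≤ (j : ℕ)
    omega
  have h0 := hnv ⟨0, by omega⟩
  have hn1 : 1 ≤ n := h0.trans (nv_le hn _)
  have e : Fin (n + 1) ≃ Ix nv := Fintype.equivOfCardEq (by simp [Ix, hn])
  generalize (⟨0, by omega⟩ : Fin r) = j0 at *
  generalize (⟨1, by omega⟩ : Fin r) = j1 at *
  constructor
  · intro H
    by_contra hc
    push Not at hc
    obtain ⟨hc1, hc2⟩ := hc
    by_cases h : 1 < nv j0 ∧ nv j0 < nv j1
    · have : ¬ s ≤ nv j0 + 3 := fun h' => by have := hc1 h' h.1; omega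
      exact obstr_b hnv hn e j0 (by omega) (by omega) H
    · have h' : nv j0 = 1 ∨ nv j0 = nv j1 := by omega
      have : ¬ s ≤ nv j1 + 2 := fun h'' => by have := hc2 h''; omega
      exact obstr_a hnv hn e j0 j1 hj h01 (by omega) H
  · rintro (⟨hs, h1, h2⟩ | ⟨hs, h1 | h1⟩)
    · exact ex_III hn hn1 e j0 hs (fun j h => by have := hne j h; omega)
    · exact ex_I hn hn1 e j0 h1 (fun j h => by have := hne j h; omega)
    · refine ex_II hn hn1 e fun j => ?_
      by_cases h : j = j0
      · subst h; omega
      · have := hne j h; omega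

end
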